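/- Let f : ℝ² → ℝ² be a C^∞ map with f(0)=0 which has corank one at 0, let λ be its Jacobian determinant, and let η be any null vector field for f. Then j⁴f(0) is A⁴-equivalent to the 4-jet at 0 of (x,y) ↦ (x, x²y + y⁴) if and only if dλ(0) = 0, the Hessian matrix H_λ(0) has rank 1, (η²λ)(0) = 0, and (η³λ)(0) ≠ 0. -/

import Mathlib

open Filter Topology

noncomputable section

/-- Directional derivative of a scalar function. -/
def dop (v : ℝ × ℝ) (g : ℝ × ℝ → ℝ) : ℝ × ℝ → ℝ :=
  fun p => fderiv ℝ g p v

/-- Partial derivative operator in the first coordinate. -/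
def pdx : (ℝ × ℝ → ℝ) → ℝ × ℝ → ℝ := dop (1, 0)

/-- Partial derivative operator in the second coordinate. -/
def pdy : (ℝ × ℝ → ℝ) → ℝ × ℝ → ℝ := dop (0, 1)

/-- Taylor coefficient `a_{ij} = ∂_x^i ∂_y^j g(0,0) / (i! j!)` of `g` at the origin. -/
def tcoeff (g : ℝ × ℝ → ℝ) (i j : ℕ) : ℝ :=
  (pdx^[i] (pdy^[j] g)) 0 / (Nat.factorial i * Nat.factorial j)

/-- The Jacobian determinant `λ_f` of a map `f : ℝ² → ℝ²`. -/
def jacDet (f : ℝ × ℝ → ℝ × ℝ) (p : ℝ × ℝ) : ℝ :=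
  (fderiv ℝ f p (1, 0)).1 * (fderiv ℝ f p (0, 1)).2 -
    (fderiv ℝ f p (1, 0)).2 * (fderiv ℝ f p (0, 1)).1

/-- `f` has corank one at `0` : the derivative of `f` at `0` has rank one. -/
def CorankOne (f : ℝ × ℝ → ℝ × ℝ) : Prop :=
  LinearMap.rank ((fderiv ℝ f 0).toLinearMap) = 1

/-- `η` is a null vector field for `f` near `0`. -/
def IsNullVF (f η : ℝ × ℝ → ℝ × ℝ) : Prop :=
  η 0 ≠ 0 ∧ ∃ U ∈ 𝓝 (0 : ℝ × ℝ),
    ContDiffOn ℝ (⊤ : ℕ∞) η U ∧ ∀ p ∈ U, jacDet f p = 0 → fderiv ℝ f p (η p) = 0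

/-- The derivative `(ηg)(p) = Dg(p)(η(p))` of `g` along the vector field `η`. -/
def etaD (η : ℝ × ℝ → ℝ × ℝ) (g : ℝ × ℝ → ℝ) : ℝ × ℝ → ℝ :=
  fun p => fderiv ℝ g p (η p)

/-- The iterated derivative `η^k g` along the vector field `η`. -/
def etaIter (η : ℝ × ℝ → ℝ × ℝ) : ℕ → (ℝ × ℝ → ℝ) → ℝ × ℝ → ℝ
  | 0, g => g
  | k + 1, g => etaD η (etaIter η k g)

/-- The Hessian matrix of second partial derivatives of `g` at `0`. -/
def hess (g : ℝ × ℝ → ℝ) : Matrix (Fin 2) (Fin 2) ℝ :=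
  !![pdx (pdx g) 0, pdx (pdy g) 0; pdy (pdx g) 0, pdy (pdy g) 0]

/-- `A^r`-equivalence of the `r`-jets at `0` of two map-germs `(ℝ²,0) → (ℝ²,0)`. -/
def JetEquiv (r : ℕ) (f g : ℝ × ℝ → ℝ × ℝ) : Prop :=
  ∃ φ ψ : ℝ × ℝ → ℝ × ℝ,
    ContDiff ℝ (⊤ : ℕ∞) φ ∧ ContDiff ℝ (⊤ : ℕ∞) ψ ∧ φ 0 = 0 ∧ ψ 0 = 0 ∧
    Function.Bijective (⇑(fderiv ℝ φ 0)) ∧ Function.Bijective (⇑(fderiv ℝ ψ 0)) ∧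
    ∀ i ≤ r, iteratedFDeriv ℝ i (ψ ∘ f ∘ φ) 0 = iteratedFDeriv ℝ i g 0

/-- `A`-equivalence of two map-germs `(ℝ²,0) → (ℝ²,0)`. -/
def AEquiv (f g : ℝ × ℝ → ℝ × ℝ) : Prop :=
  ∃ φ ψ : ℝ × ℝ → ℝ × ℝ,
    ContDiff ℝ (⊤ : ℕ∞) φ ∧ ContDiff ℝ (⊤ : ℕ∞) ψ ∧ φ 0 = 0 ∧ ψ 0 = 0 ∧
    Function.Bijective (⇑(fderiv ℝ φ 0)) ∧ Function.Bijective (⇑(fderiv ℝ ψ 0)) ∧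
    ∀ᶠ p in 𝓝 (0 : ℝ × ℝ), ψ (f (φ p)) = g p

/-- `f` has the form `(x, g(x,y))` where `g` is `C^∞` and the Taylor coefficients of `g`
of total degree `< N` at the origin are prescribed by `P`. -/
def HasForm (f : ℝ × ℝ → ℝ × ℝ) (g : ℝ × ℝ → ℝ) (N : ℕ) (P : ℕ → ℕ → ℝ) : Prop :=
  ContDiff ℝ (⊤ : ℕ∞) g ∧ (∀ p, f p = (p.1, g p)) ∧
    ∀ i j, i + j < N → tcoeff g i j = P i j


open Asymptotics

section van
variable {E F : Type*} [NormedAddCommGroup E] [NormedSpace ℝ E]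
  [NormedAddCommGroup F] [NormedSpace ℝ F]

lemma mvt_bigO {h : E → F} {n : ℕ} (hd : ∀ᶠ p in 𝓝 (0 : E), DifferentiableAt ℝ h p)
    (h0 : h 0 = 0) (hO : fderiv ℝ h =O[𝓝 0] (fun p => ‖p‖ ^ n)) :
    h =O[𝓝 0] (fun p => ‖p‖ ^ (n + 1)) := by
  obtain ⟨C, hC⟩ := hO.bound
  obtain ⟨ε, hε, hb⟩ := Metric.eventually_nhds_iff_ball.1 (hd.and hC)
  refine IsBigO.of_bound C ?_
  filter_upwards [Metric.ball_mem_nhds (0 : E) hε] with p hp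
  have hp' : ‖p‖ < ε := by simpa using hp
  have key := (convex_closedBall (0 : E) ‖p‖).norm_image_sub_le_of_norm_fderiv_le
    (f := h) (𝕜 := ℝ) (C := C * ‖p‖ ^ n) (x := 0) (y := p) ?_ ?_ (by simp) (by simp)
  · simpa [h0, pow_succ, mul_assoc] using key
  · intro x hx
    exact (hb x (by simp at hx ⊢; linarith)).1
  · intro x hx
    have hx' : ‖x‖ ≤ ‖p‖ := by simpa using hx
    have h1 := (hb x (by simp; linarith)).2
    have h2 := (hb p hp).2
    rw [norm_pow, norm_norm] at h1
    by_cases hC0 : 0 ≤ C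
    · exact h1.trans (by gcongr)
    · have : C * ‖x‖ ^ n ≤ 0 := mul_nonpos_of_nonpos_of_nonneg (by linarith) (by positivity)
      rw [norm_pow, norm_norm] at h2
      have h3 : 0 ≤ C * ‖p‖ ^ n := (norm_nonneg _).trans h2
      linarith

lemma mvt_littleO {h : E → F} {n : ℕ} (hd : ∀ᶠ p in 𝓝 (0 : E), DifferentiableAt ℝ h p)
    (h0 : h 0 = 0) (hO : fderiv ℝ h =o[𝓝 0] (fun p => ‖p‖ ^ n)) :
    h =o[𝓝 0] (fun p => ‖p‖ ^ (n + 1)) := by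
  refine IsLittleO.of_bound ?_
  intro C hC0
  have hC := hO.bound hC0
  obtain ⟨ε, hε, hb⟩ := Metric.eventually_nhds_iff_ball.1 (hd.and hC)
  filter_upwards [Metric.ball_mem_nhds (0 : E) hε] with p hp
  have hp' : ‖p‖ < ε := by simpa using hp
  have key := (convex_closedBall (0 : E) ‖p‖).norm_image_sub_le_of_norm_fderiv_le
    (f := h) (𝕜 := ℝ) (C := C * ‖p‖ ^ n) (x := 0) (y := p) ?_ ?_ (by simp) (by simp)
  · simpa [h0, pow_succ, mul_assoc] using key
  · intro x hx
    exact (hb x (by simp at hx ⊢; linarith)).1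
  · intro x hx
    have hx' : ‖x‖ ≤ ‖p‖ := by simpa using hx
    have h1 := (hb x (by simp; linarith)).2
    rw [norm_pow, norm_norm] at h1
    exact h1.trans (by gcongr)

end van

lemma van_littleO {E : Type} [NormedAddCommGroup E] [NormedSpace ℝ E] (r : ℕ) :
    ∀ {F : Type} [NormedAddCommGroup F] [NormedSpace ℝ F] {h : E → F},
    ContDiff ℝ (⊤ : ℕ∞) h → (∀ i ≤ r, iteratedFDeriv ℝ i h 0 = 0) →
    h =o[𝓝 0] (fun p => ‖p‖ ^ r) := by
  induction r with
  | zero =>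
    intro F _ _ h hs hv
    have h0 : h 0 = 0 := by
      have := hv 0 le_rfl
      have := congrArg (fun m => m 0) this
      simpa using this
    simp only [pow_zero]
    rw [isLittleO_one_iff]
    have := hs.continuous.tendsto 0
    rwa [h0] at this
  | succ r ih =>
    intro F _ _ h hs hv
    have h0 : h 0 = 0 := by
      have := hv 0 (Nat.zero_le _)
      have := congrArg (fun m => m 0) this
      simpa using this
    refine mvt_littleO (Eventually.of_forall fun p => hs.differentiable (by simp) p) h0 ?_
    refine ih (hs.fderiv_right (by simp)) ?_
    intro i hi
    have := norm_iteratedFDeriv_fderiv (𝕜 := ℝ) (f := h) (x := 0) (n := i)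
    rw [hv (i + 1) (by omega)] at this
    simpa using this

/-- smooth and all derivatives of order `< n` vanish at `0`. -/
def VOrd {F : Type} [NormedAddCommGroup F] [NormedSpace ℝ F] (n : ℕ) (h : ℝ × ℝ → F) : Prop :=
  ContDiff ℝ (⊤ : ℕ∞) h ∧ ∀ i < n, iteratedFDeriv ℝ i h 0 = 0

lemma VOrd.mono {F : Type} [NormedAddCommGroup F] [NormedSpace ℝ F] {m n : ℕ} {h : ℝ × ℝ → F}
    (hh : VOrd n h) (hm : m ≤ n) : VOrd m h := ⟨hh.1, fun i hi => hh.2 i (by omega)⟩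

lemma ord_zero {h : ℝ × ℝ → ℝ} (hh : ContDiff ℝ (⊤ : ℕ∞) h) : VOrd 0 h :=
  ⟨hh, fun i hi => by omega⟩

lemma ord_one {h : ℝ × ℝ → ℝ} (hh : ContDiff ℝ (⊤ : ℕ∞) h) (h0 : h 0 = 0) : VOrd 1 h := by
  refine ⟨hh, fun i hi => ?_⟩
  obtain rfl : i = 0 := by omega
  ext m
  simp [h0]

lemma VOrd.mul {m n : ℕ} {a b : ℝ × ℝ → ℝ} (ha : VOrd m a) (hb : VOrd n b) :
    VOrd (m + n) (fun p => a p * b p) := by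
  refine ⟨ha.1.mul hb.1, fun i hi => ?_⟩
  have := norm_iteratedFDeriv_mul_le (𝕜 := ℝ) ha.1 hb.1 0 (n := i) (by exact_mod_cast le_top)
  rw [Finset.sum_eq_zero] at this
  · simpa using this
  · intro k hk
    rw [Finset.mem_range] at hk
    by_cases hkm : k < m
    · rw [ha.2 k hkm]; simp
    · rw [hb.2 (i - k) (by omega)]; simp

lemma VOrd.add {n : ℕ} {a b : ℝ × ℝ → ℝ} (ha : VOrd n a) (hb : VOrd n b) :
    VOrd n (fun p => a p + b p) := by
  refine ⟨ha.1.add hb.1, fun i hi => ?_⟩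
  have h1 : ContDiffAt ℝ (i : ℕ∞) a 0 := (ha.1.of_le (by exact_mod_cast le_top)).contDiffAt
  have h2 : ContDiffAt ℝ (i : ℕ∞) b 0 := (hb.1.of_le (by exact_mod_cast le_top)).contDiffAt
  have := fun_iteratedFDeriv_add_apply (𝕜 := ℝ) (i := i) h1 h2
  rw [this, ha.2 i hi, hb.2 i hi, add_zero]

lemma VOrd.comp {F : Type} [NormedAddCommGroup F] [NormedSpace ℝ F] {n : ℕ} {a : ℝ × ℝ → F}
    (ha : VOrd n a) {φ : ℝ × ℝ → ℝ × ℝ}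
    (hφ : ContDiff ℝ (⊤ : ℕ∞) φ) (h0 : φ 0 = 0) : VOrd n (fun p => a (φ p)) := by
  refine ⟨ha.1.comp hφ, fun i hi => ?_⟩
  let D : ℝ := 1 + ∑ k ∈ Finset.range (i + 1), ‖iteratedFDeriv ℝ k φ 0‖
  have hD : 1 ≤ D := by
    have : 0 ≤ ∑ k ∈ Finset.range (i + 1), ‖iteratedFDeriv ℝ k φ 0‖ := by positivity
    simp only [D]; linarith
  have := norm_iteratedFDeriv_comp_le (𝕜 := ℝ) (g := a) (f := φ) (n := i) (N := (⊤ : ℕ∞))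
    ha.1 hφ (by exact_mod_cast le_top) 0 (C := 0) (D := D) ?_ ?_
  · simpa [Function.comp_def] using this
  · intro k hk
    rw [h0, ha.2 k (by omega)]; simp
  · intro k hk1 hk
    have h1 : ‖iteratedFDeriv ℝ k φ 0‖ ≤ D := by
      have := Finset.single_le_sum (f := fun k => ‖iteratedFDeriv ℝ k φ 0‖)
        (fun j _ => norm_nonneg _) (Finset.mem_range.2 (show k < i + 1 by omega))
      simp only [D]; linarith
    exact h1.trans (le_self_pow₀ hD (by omega))

lemma dop_smooth {v : ℝ × ℝ} {g : ℝ × ℝ → ℝ} (hg : ContDiff ℝ (⊤ : ℕ∞) g) :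
    ContDiff ℝ (⊤ : ℕ∞) (dop v g) := by
  unfold dop
  exact (hg.fderiv_right (m := (⊤ : ℕ∞)) (by simp)).clm_apply contDiff_const

lemma pdx_smooth {g : ℝ × ℝ → ℝ} (hg : ContDiff ℝ (⊤ : ℕ∞) g) :
    ContDiff ℝ (⊤ : ℕ∞) (pdx g) := dop_smooth hg

lemma pdy_smooth {g : ℝ × ℝ → ℝ} (hg : ContDiff ℝ (⊤ : ℕ∞) g) :
    ContDiff ℝ (⊤ : ℕ∞) (pdy g) := dop_smooth hg

lemma dop_dop {u v : ℝ × ℝ} {g : ℝ × ℝ → ℝ} (hg : ContDiff ℝ (⊤ : ℕ∞) g) (p : ℝ × ℝ) :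
    dop u (dop v g) p = fderiv ℝ (fderiv ℝ g) p u v := by
  unfold dop
  have h1 : DifferentiableAt ℝ (fderiv ℝ g) p :=
    (hg.fderiv_right (m := (⊤ : ℕ∞)) (by simp)).differentiable (by simp) p
  rw [fderiv_clm_apply h1 (differentiableAt_const v)]
  simp

lemma dop_comm (u v : ℝ × ℝ) {g : ℝ × ℝ → ℝ} (hg : ContDiff ℝ (⊤ : ℕ∞) g) :
    dop u (dop v g) = dop v (dop u g) := by
  funext p
  rw [dop_dop hg, dop_dop hg]
  exact (hg.contDiffAt (x := p)).isSymmSndFDerivAt (by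
    simp only [minSmoothness_of_isRCLikeNormedField]
    exact WithTop.coe_le_coe.2 (le_top : (2 : ℕ∞) ≤ ⊤)) u v

lemma pdxy {g : ℝ × ℝ → ℝ} (hg : ContDiff ℝ (⊤ : ℕ∞) g) : pdy (pdx g) = pdx (pdy g) :=
  dop_comm _ _ hg

lemma pdy_iter_smooth {g : ℝ × ℝ → ℝ} (hg : ContDiff ℝ (⊤ : ℕ∞) g) (j : ℕ) :
    ContDiff ℝ (⊤ : ℕ∞) (pdy^[j] g) := by
  induction j with
  | zero => exact hg
  | succ j ih => rw [Function.iterate_succ_apply']; exact pdy_smooth ih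

lemma pdx_iter_smooth {g : ℝ × ℝ → ℝ} (hg : ContDiff ℝ (⊤ : ℕ∞) g) (j : ℕ) :
    ContDiff ℝ (⊤ : ℕ∞) (pdx^[j] g) := by
  induction j with
  | zero => exact hg
  | succ j ih => rw [Function.iterate_succ_apply']; exact pdx_smooth ih

lemma pdy_iter_pdx {g : ℝ × ℝ → ℝ} (hg : ContDiff ℝ (⊤ : ℕ∞) g) (j : ℕ) :
    pdy^[j] (pdx g) = pdx (pdy^[j] g) := by
  induction j with
  | zero => rfl
  | succ j ih =>
    rw [Function.iterate_succ_apply', ih, Function.iterate_succ_apply',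
      pdxy (pdy_iter_smooth hg j)]

/-- all partial derivatives of order `< n` vanish at `0` -/
def Flat (n : ℕ) (g : ℝ × ℝ → ℝ) : Prop := ∀ i j, i + j < n → (pdx^[i] (pdy^[j] g)) 0 = 0

lemma fderiv_decomp (g : ℝ × ℝ → ℝ) (p v : ℝ × ℝ) :
    fderiv ℝ g p v = v.1 * pdx g p + v.2 * pdy g p := by
  have : v = v.1 • ((1, 0) : ℝ × ℝ) + v.2 • ((0, 1) : ℝ × ℝ) := by ext <;> simp
  conv_lhs => rw [this]
  rw [map_add, map_smul, map_smul]
  simp [pdx, pdy, dop]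

lemma iter_comp_left {F : Type} [NormedAddCommGroup F] [NormedSpace ℝ F] (L : ℝ →L[ℝ] F)
    {g : ℝ × ℝ → ℝ} {n : ℕ} (hg : VOrd n g) : VOrd n (fun p => L (g p)) := by
  refine ⟨L.contDiff.comp hg.1, fun i hi => ?_⟩
  have := L.iteratedFDeriv_comp_left (f := g) (x := 0) hg.1.contDiffAt
    (i := i) (by exact_mod_cast le_top)
  rw [Function.comp_def] at this
  rw [this, hg.2 i hi]
  ext; simp

lemma vord_of_flat (n : ℕ) : ∀ {g : ℝ × ℝ → ℝ}, ContDiff ℝ (⊤ : ℕ∞) g → Flat n g → VOrd n g := by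
  induction n with
  | zero => intro g hg _; exact ord_zero hg
  | succ n ih =>
    intro g hg hF
    have hx : VOrd n (pdx g) := ih (pdx_smooth hg) fun i j hij => by
      rw [pdy_iter_pdx hg, ← Function.iterate_succ_apply]
      exact hF (i + 1) j (by omega)
    have hy : VOrd n (pdy g) := ih (pdy_smooth hg) fun i j hij => by
      rw [← Function.iterate_succ_apply]
      exact hF i (j + 1) (by omega)
    have h0 : g 0 = 0 := hF 0 0 (by omega)
    refine ⟨hg, fun i hi => ?_⟩
    cases i with
    | zero => ext m; simp [h0]
    | succ i =>
      rw [← norm_eq_zero, ← norm_iteratedFDeriv_fderiv]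
      have hd : fderiv ℝ g = fun p =>
          (ContinuousLinearMap.toSpanSingleton ℝ (ContinuousLinearMap.fst ℝ ℝ ℝ)) (pdx g p) +
          (ContinuousLinearMap.toSpanSingleton ℝ (ContinuousLinearMap.snd ℝ ℝ ℝ)) (pdy g p) := by
        funext p
        refine ContinuousLinearMap.ext fun v => ?_
        rw [fderiv_decomp]
        simp [mul_comm]
      have a := iter_comp_left
        (ContinuousLinearMap.toSpanSingleton ℝ (ContinuousLinearMap.fst ℝ ℝ ℝ)) hx
      have b := iter_comp_left
        (ContinuousLinearMap.toSpanSingleton ℝ (ContinuousLinearMap.snd ℝ ℝ ℝ)) hy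
      have h1 := (a.1.of_le (m := (i : ℕ∞)) (by exact_mod_cast le_top)).contDiffAt (x := 0)
      have h2 := (b.1.of_le (m := (i : ℕ∞)) (by exact_mod_cast le_top)).contDiffAt (x := 0)
      rw [hd, fun_iteratedFDeriv_add_apply (𝕜 := ℝ) (i := i) h1 h2, a.2 i (by omega),
        b.2 i (by omega)]
      simp

lemma dop_sub {v : ℝ × ℝ} {a b : ℝ × ℝ → ℝ} (ha : ContDiff ℝ (⊤ : ℕ∞) a)
    (hb : ContDiff ℝ (⊤ : ℕ∞) b) : dop v (fun p => a p - b p) = fun p => dop v a p - dop v b p := by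
  funext p
  unfold dop
  rw [fderiv_fun_sub (ha.differentiable (by simp) p) (hb.differentiable (by simp) p)]
  simp

lemma dop_smul {v : ℝ × ℝ} (c : ℝ) {a : ℝ × ℝ → ℝ} (ha : ContDiff ℝ (⊤ : ℕ∞) a) :
    dop v (fun p => c * a p) = fun p => c * dop v a p := by
  funext p
  unfold dop
  rw [fderiv_const_mul (ha.differentiable (by simp) p)]
  simp

lemma pdy_iter_sub {a b : ℝ × ℝ → ℝ} (ha : ContDiff ℝ (⊤ : ℕ∞) a)
    (hb : ContDiff ℝ (⊤ : ℕ∞) b) (j : ℕ) :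
    pdy^[j] (fun p => a p - b p) = fun p => pdy^[j] a p - pdy^[j] b p := by
  induction j with
  | zero => rfl
  | succ j ih =>
    simp only [Function.iterate_succ_apply', ih]
    exact dop_sub (pdy_iter_smooth ha j) (pdy_iter_smooth hb j)

lemma pdx_iter_sub {a b : ℝ × ℝ → ℝ} (ha : ContDiff ℝ (⊤ : ℕ∞) a)
    (hb : ContDiff ℝ (⊤ : ℕ∞) b) (j : ℕ) :
    pdx^[j] (fun p => a p - b p) = fun p => pdx^[j] a p - pdx^[j] b p := by
  induction j with
  | zero => rfl
  | succ j ih =>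
    simp only [Function.iterate_succ_apply', ih]
    exact dop_sub (pdx_iter_smooth ha j) (pdx_iter_smooth hb j)

lemma pdy_mono (c : ℝ) (k l : ℕ) :
    pdy (fun p => c * (p.1 ^ k * p.2 ^ l)) = fun p => (c * l) * (p.1 ^ k * p.2 ^ (l - 1)) := by
  funext p
  have h : HasFDerivAt (fun p : ℝ × ℝ => c * (p.1 ^ k * p.2 ^ l)) _ p :=
    ((HasFDerivAt.pow (hasFDerivAt_fst (𝕜 := ℝ) (E := ℝ) (F := ℝ)) k).mul
      (HasFDerivAt.pow (hasFDerivAt_snd (𝕜 := ℝ) (E := ℝ) (F := ℝ)) l)).const_mul c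
  simp only [pdy, dop]
  rw [h.fderiv]
  simp
  ring

lemma pdx_mono (c : ℝ) (k l : ℕ) :
    pdx (fun p => c * (p.1 ^ k * p.2 ^ l)) = fun p => (c * k) * (p.1 ^ (k - 1) * p.2 ^ l) := by
  funext p
  have h : HasFDerivAt (fun p : ℝ × ℝ => c * (p.1 ^ k * p.2 ^ l)) _ p :=
    ((HasFDerivAt.pow (hasFDerivAt_fst (𝕜 := ℝ) (E := ℝ) (F := ℝ)) k).mul
      (HasFDerivAt.pow (hasFDerivAt_snd (𝕜 := ℝ) (E := ℝ) (F := ℝ)) l)).const_mul c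
  simp only [pdx, dop]
  rw [h.fderiv]
  simp
  ring

lemma pdy_iter_mono (c : ℝ) (k l j : ℕ) :
    pdy^[j] (fun p => c * (p.1 ^ k * p.2 ^ l)) =
      fun p => (c * l.descFactorial j) * (p.1 ^ k * p.2 ^ (l - j)) := by
  induction j with
  | zero => simp
  | succ j ih =>
    rw [Function.iterate_succ_apply', ih, pdy_mono]
    funext p
    rw [Nat.descFactorial_succ, Nat.sub_sub]
    push_cast
    ring

lemma pdx_iter_mono (c : ℝ) (k l j : ℕ) :
    pdx^[j] (fun p => c * (p.1 ^ k * p.2 ^ l)) =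
      fun p => (c * k.descFactorial j) * (p.1 ^ (k - j) * p.2 ^ l) := by
  induction j with
  | zero => simp
  | succ j ih =>
    rw [Function.iterate_succ_apply', ih, pdx_mono]
    funext p
    rw [Nat.descFactorial_succ, Nat.sub_sub]
    push_cast
    ring

lemma pd_mono_zero (c : ℝ) (k l i j : ℕ) :
    pdx^[i] (pdy^[j] (fun p => c * (p.1 ^ k * p.2 ^ l))) 0 =
      if i = k ∧ j = l then c * (k.factorial * l.factorial) else 0 := by
  rw [pdy_iter_mono, pdx_iter_mono]
  simp only [Prod.fst_zero, Prod.snd_zero]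
  split_ifs with h
  · obtain ⟨rfl, rfl⟩ := h
    simp [Nat.descFactorial_self]; ring
  · rcases lt_trichotomy i k with h1 | h1 | h1
    · rw [zero_pow (by omega)]; simp
    · rcases lt_trichotomy j l with h2 | h2 | h2
      · rw [zero_pow (n := l - j) (by omega)]; simp
      · exact absurd ⟨h1, h2⟩ h
      · rw [Nat.descFactorial_of_lt h2]; simp
    · rw [Nat.descFactorial_of_lt h1]; simp

lemma mono_smooth (c : ℝ) (k l : ℕ) :
    ContDiff ℝ (⊤ : ℕ∞) (fun p : ℝ × ℝ => c * (p.1 ^ k * p.2 ^ l)) := by fun_prop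

lemma taylor_aux (g : ℝ × ℝ → ℝ) (hg : ContDiff ℝ (⊤ : ℕ∞) g) (c : ℕ × ℕ → ℝ)
    (S : Finset (ℕ × ℕ)) :
    ContDiff ℝ (⊤ : ℕ∞) (fun p => g p - ∑ s ∈ S, c s * (p.1 ^ s.1 * p.2 ^ s.2)) ∧
    ∀ i j, pdx^[i] (pdy^[j] (fun p => g p - ∑ s ∈ S, c s * (p.1 ^ s.1 * p.2 ^ s.2))) 0 =
      pdx^[i] (pdy^[j] g) 0 - if (i, j) ∈ S then c (i, j) * (i.factorial * j.factorial) else 0 := by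
  induction S using Finset.induction_on with
  | empty => simpa using hg
  | insert a S ha ih =>
    have e : (fun p : ℝ × ℝ => g p - ∑ s ∈ insert a S, c s * (p.1 ^ s.1 * p.2 ^ s.2)) =
        fun p => (g p - ∑ s ∈ S, c s * (p.1 ^ s.1 * p.2 ^ s.2)) -
          c a * (p.1 ^ a.1 * p.2 ^ a.2) := by
      funext p; rw [Finset.sum_insert ha]; ring
    rw [e]
    refine ⟨ih.1.sub (mono_smooth _ _ _), fun i j => ?_⟩
    rw [pdy_iter_sub ih.1 (mono_smooth _ _ _),
      pdx_iter_sub (pdy_iter_smooth ih.1 j) (pdy_iter_smooth (mono_smooth _ _ _) j)]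
    simp only
    rw [ih.2, pd_mono_zero]
    by_cases h : (i, j) = a
    · subst h
      simp [ha]
    · have h' : ¬ (i = a.1 ∧ j = a.2) := fun hh => h (Prod.ext hh.1 hh.2)
      simp [h, h']

lemma taylor_vord (g : ℝ × ℝ → ℝ) (hg : ContDiff ℝ (⊤ : ℕ∞) g) (n : ℕ) (S : Finset (ℕ × ℕ))
    (hS : ∀ i j, i + j < n → (i, j) ∈ S) :
    VOrd n (fun p => g p - ∑ s ∈ S, tcoeff g s.1 s.2 * (p.1 ^ s.1 * p.2 ^ s.2)) := by
  have := taylor_aux g hg (fun s => tcoeff g s.1 s.2) S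
  refine vord_of_flat n this.1 fun i j hij => ?_
  rw [this.2, if_pos (hS i j hij)]
  simp only [tcoeff]
  field_simp
  simp

lemma taylor4 (g : ℝ × ℝ → ℝ) (hg : ContDiff ℝ (⊤ : ℕ∞) g) :
    VOrd 4 (fun p => g p - (tcoeff g 0 0 + tcoeff g 1 0 * p.1 + tcoeff g 0 1 * p.2
      + (tcoeff g 2 0 * p.1 ^ 2 + tcoeff g 1 1 * (p.1 * p.2) + tcoeff g 0 2 * p.2 ^ 2)
      + (tcoeff g 3 0 * p.1 ^ 3 + tcoeff g 2 1 * (p.1 ^ 2 * p.2) + tcoeff g 1 2 * (p.1 * p.2 ^ 2)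
        + tcoeff g 0 3 * p.2 ^ 3))) := by
  have := taylor_vord g hg 4
    {(0,0),(1,0),(0,1),(2,0),(1,1),(0,2),(3,0),(2,1),(1,2),(0,3)} ?_
  · convert this using 2 with p
    simp
    ring
  · intro i j hij
    have : i < 4 := by omega
    have : j < 4 := by omega
    interval_cases i <;> interval_cases j <;> first | (exfalso; omega) | decide

lemma taylor5 (g : ℝ × ℝ → ℝ) (hg : ContDiff ℝ (⊤ : ℕ∞) g) :
    VOrd 5 (fun p => g p - (tcoeff g 0 0 + tcoeff g 1 0 * p.1 + tcoeff g 0 1 * p.2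
      + (tcoeff g 2 0 * p.1 ^ 2 + tcoeff g 1 1 * (p.1 * p.2) + tcoeff g 0 2 * p.2 ^ 2)
      + (tcoeff g 3 0 * p.1 ^ 3 + tcoeff g 2 1 * (p.1 ^ 2 * p.2) + tcoeff g 1 2 * (p.1 * p.2 ^ 2)
        + tcoeff g 0 3 * p.2 ^ 3)
      + (tcoeff g 4 0 * p.1 ^ 4 + tcoeff g 3 1 * (p.1 ^ 3 * p.2)
        + tcoeff g 2 2 * (p.1 ^ 2 * p.2 ^ 2) + tcoeff g 1 3 * (p.1 * p.2 ^ 3)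
        + tcoeff g 0 4 * p.2 ^ 4))) := by
  have := taylor_vord g hg 5
    {(0,0),(1,0),(0,1),(2,0),(1,1),(0,2),(3,0),(2,1),(1,2),(0,3),(4,0),(3,1),(2,2),(1,3),(0,4)} ?_
  · convert this using 2 with p
    simp
    ring
  · intro i j hij
    have : i < 5 := by omega
    have : j < 5 := by omega
    interval_cases i <;> interval_cases j <;> first | (exfalso; omega) | decide

/-- geometric form of the condition on the Jacobian -/
def Cc (lam : ℝ × ℝ → ℝ) (v : ℝ × ℝ) : Prop :=
  ∃ (a : ℝ) (L : ℝ × ℝ →L[ℝ] ℝ), a ≠ 0 ∧ L ≠ 0 ∧ L v = 0 ∧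
    (fun p => lam p - a * (L p) ^ 2) =O[𝓝 0] (fun p : ℝ × ℝ => ‖p‖ ^ 3) ∧
    ∃ c : ℝ, c ≠ 0 ∧ ∀ γ : ℝ → ℝ × ℝ,
      (fun t => γ t - t • v) =O[𝓝 0] (fun t : ℝ => t ^ 2) →
      (fun t => lam (γ t) - c * t ^ 3) =o[𝓝 0] (fun t : ℝ => t ^ 3)

lemma t_pow_isBigO {m n : ℕ} (h : m ≤ n) : (fun t : ℝ => t ^ n) =O[𝓝 0] (fun t : ℝ => t ^ m) :=
  h.eq_or_lt.elim (fun e => e ▸ isBigO_refl _ _) (fun e => (isLittleO_pow_pow e).isBigO)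

lemma t_pow_isLittleO {m n : ℕ} (h : m < n) :
    (fun t : ℝ => t ^ n) =o[𝓝 0] (fun t : ℝ => t ^ m) := isLittleO_pow_pow h

lemma curve_bigO {v : ℝ × ℝ} {γ : ℝ → ℝ × ℝ}
    (h : (fun t => γ t - t • v) =O[𝓝 0] (fun t : ℝ => t ^ 2)) :
    γ =O[𝓝 0] (fun t : ℝ => t) := by
  have h1 : (fun t : ℝ => t • v) =O[𝓝 0] (fun t : ℝ => t) := by
    refine IsBigO.of_bound ‖v‖ (Eventually.of_forall fun t => ?_)
    rw [norm_smul, mul_comm]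
  have h2 : (fun t : ℝ => t ^ 2) =O[𝓝 0] (fun t : ℝ => t) := by
    simpa using t_pow_isBigO (show 1 ≤ 2 by norm_num)
  have := (h.trans h2).add h1
  simpa using this

lemma curve_tendsto {γ : ℝ → ℝ × ℝ} (h : γ =O[𝓝 0] (fun t : ℝ => t)) :
    Tendsto γ (𝓝 0) (𝓝 0) := h.trans_tendsto tendsto_id

lemma cubic_curve (k0 k1 k2 k3 : ℝ) {v : ℝ × ℝ} {γ : ℝ → ℝ × ℝ}
    (h : (fun t => γ t - t • v) =O[𝓝 0] (fun t : ℝ => t ^ 2)) :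
    (fun t => (k0 * (γ t).1 ^ 3 + k1 * ((γ t).1 ^ 2 * (γ t).2) + k2 * ((γ t).1 * (γ t).2 ^ 2)
        + k3 * (γ t).2 ^ 3)
      - (k0 * v.1 ^ 3 + k1 * (v.1 ^ 2 * v.2) + k2 * (v.1 * v.2 ^ 2) + k3 * v.2 ^ 3) * t ^ 3)
      =o[𝓝 0] (fun t : ℝ => t ^ 3) := by
  have hg := curve_bigO h
  have ha : (fun t => (γ t).1) =O[𝓝 0] (fun t : ℝ => t) := IsBigO.trans (IsBigO.of_bound 1
    (Eventually.of_forall fun t => by simpa using norm_fst_le (γ t))) hg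
  have hc : (fun t => (γ t).2) =O[𝓝 0] (fun t : ℝ => t) := IsBigO.trans (IsBigO.of_bound 1
    (Eventually.of_forall fun t => by simpa using norm_snd_le (γ t))) hg
  have he1 : (fun t => (γ t).1 - t * v.1) =O[𝓝 0] (fun t : ℝ => t ^ 2) :=
    IsBigO.trans (IsBigO.of_bound 1
    (Eventually.of_forall fun t => by simpa using norm_fst_le (γ t - t • v))) h
  have he2 : (fun t => (γ t).2 - t * v.2) =O[𝓝 0] (fun t : ℝ => t ^ 2) :=
    IsBigO.trans (IsBigO.of_bound 1
    (Eventually.of_forall fun t => by simpa using norm_snd_le (γ t - t • v))) h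
  have hb : (fun t : ℝ => t * v.1) =O[𝓝 0] (fun t : ℝ => t) := by
    simpa [mul_comm] using (isBigO_refl (fun t : ℝ => t) (𝓝 0)).const_mul_left v.1
  have hd : (fun t : ℝ => t * v.2) =O[𝓝 0] (fun t : ℝ => t) := by
    simpa [mul_comm] using (isBigO_refl (fun t : ℝ => t) (𝓝 0)).const_mul_left v.2
  have M1 := he1.mul (((((ha.mul ha).add ((ha.mul hb).add (hb.mul hb))).const_mul_left k0).add
    (((ha.add hb).mul hc).const_mul_left k1)).add ((hc.mul hc).const_mul_left k2))
  have M2 := he2.mul (((((hc.mul hc).add ((hc.mul hd).add (hd.mul hd))).const_mul_left k3).add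
    (((hc.add hd).mul hb).const_mul_left k2)).add ((hb.mul hb).const_mul_left k1))
  have := M1.add M2
  refine IsBigO.trans_isLittleO (g := fun t : ℝ => t ^ 4) ?_ (t_pow_isLittleO (by norm_num))
  refine (this.congr_left ?_).congr_right ?_
  · intro t; ring
  · intro t; ring

lemma cc_of_taylor {lam : ℝ × ℝ → ℝ} {v : ℝ × ℝ} {a : ℝ} {L : ℝ × ℝ →L[ℝ] ℝ} (k0 k1 k2 k3 : ℝ)
    (ha : a ≠ 0) (hL : L ≠ 0) (hLv : L v = 0)
    (hk : k0 * v.1 ^ 3 + k1 * (v.1 ^ 2 * v.2) + k2 * (v.1 * v.2 ^ 2) + k3 * v.2 ^ 3 ≠ 0)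
    (h : (fun p : ℝ × ℝ => lam p - (a * (L p) ^ 2 + (k0 * p.1 ^ 3 + k1 * (p.1 ^ 2 * p.2)
      + k2 * (p.1 * p.2 ^ 2) + k3 * p.2 ^ 3))) =o[𝓝 0] (fun p : ℝ × ℝ => ‖p‖ ^ 3)) :
    Cc lam v := by
  refine ⟨a, L, ha, hL, hLv, ?_, _, hk, ?_⟩
  · have hx : (fun p : ℝ × ℝ => p.1) =O[𝓝 0] (fun p : ℝ × ℝ => ‖p‖) := IsBigO.of_bound 1
      (Eventually.of_forall fun p => by simpa using norm_fst_le p)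
    have hy : (fun p : ℝ × ℝ => p.2) =O[𝓝 0] (fun p : ℝ × ℝ => ‖p‖) := IsBigO.of_bound 1
      (Eventually.of_forall fun p => by simpa using norm_snd_le p)
    have M := (((((hx.mul hx).mul hx).const_mul_left k0).add
      (((hx.mul hx).mul hy).const_mul_left k1)).add (((hx.mul hy).mul hy).const_mul_left k2)).add
      (((hy.mul hy).mul hy).const_mul_left k3)
    have M' : (fun p : ℝ × ℝ => k0 * p.1 ^ 3 + k1 * (p.1 ^ 2 * p.2)
      + k2 * (p.1 * p.2 ^ 2) + k3 * p.2 ^ 3) =O[𝓝 0] (fun p : ℝ × ℝ => ‖p‖ ^ 3) :=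
      (M.congr_left (fun p => by ring)).congr_right (fun p => by ring)
    exact (h.isBigO.add M').congr_left fun p => by ring
  · intro γ hγ
    have hg := curve_bigO hγ
    have h1 := (h.comp_tendsto (curve_tendsto hg)).trans_isBigO
      (show (fun t => ‖γ t‖ ^ 3) =O[𝓝 0] (fun t : ℝ => t ^ 3) from hg.norm_left.pow 3)
    have h2 := cubic_curve k0 k1 k2 k3 hγ
    have h3 : (fun t => L (γ t)) =O[𝓝 0] (fun t : ℝ => t ^ 2) := by
      have : (fun t => L (γ t - t • v)) =O[𝓝 0] (fun t : ℝ => t ^ 2) :=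
        (L.isBigO_comp _ _).trans hγ
      simpa [hLv] using this
    have h4 : (fun t => a * L (γ t) ^ 2) =o[𝓝 0] (fun t : ℝ => t ^ 3) :=
      IsBigO.trans_isLittleO (g := fun t : ℝ => t ^ 4)
        (((h3.pow 2).const_mul_left a).congr_right fun t => by ring) (t_pow_isLittleO (by norm_num))
    exact ((h1.add h2).add h4).congr_left fun t => by simp only [Function.comp]; ring

lemma Cc.perturb {lam mu : ℝ × ℝ → ℝ} {v : ℝ × ℝ} (h : Cc lam v)
    (hd : (fun p => mu p - lam p) =o[𝓝 0] (fun p : ℝ × ℝ => ‖p‖ ^ 3)) : Cc mu v := by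
  obtain ⟨a, L, ha, hL, hLv, hO, c, hc, hγ⟩ := h
  refine ⟨a, L, ha, hL, hLv, (hd.isBigO.add hO).congr_left fun p => by ring, c, hc, ?_⟩
  intro γ hg
  have hg' := curve_bigO hg
  have h1 := (hd.comp_tendsto (curve_tendsto hg')).trans_isBigO
      (show (fun t => ‖γ t‖ ^ 3) =O[𝓝 0] (fun t : ℝ => t ^ 3) from hg'.norm_left.pow 3)
  exact (h1.add (hγ γ hg)).congr_left fun t => by simp only [Function.comp]; ring

lemma second_order {F : Type} [NormedAddCommGroup F] [NormedSpace ℝ F] {χ : ℝ × ℝ → F}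
    (hχ : ContDiff ℝ (⊤ : ℕ∞) χ) (h0 : χ 0 = 0) :
    (fun p => χ p - fderiv ℝ χ 0 p) =O[𝓝 0] (fun p : ℝ × ℝ => ‖p‖ ^ 2) := by
  have hd : Differentiable ℝ χ := hχ.differentiable (by simp)
  refine mvt_bigO (n := 1) (Eventually.of_forall fun p =>
    (hd p).sub (fderiv ℝ χ 0).differentiableAt) (by simp [h0]) ?_
  have e : fderiv ℝ (fun p => χ p - fderiv ℝ χ 0 p) = fun p => fderiv ℝ χ p - fderiv ℝ χ 0 := by
    funext p
    rw [fderiv_fun_sub (hd p) (fderiv ℝ χ 0).differentiableAt]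
    simp
  rw [e]
  have hd2 : DifferentiableAt ℝ (fderiv ℝ χ) 0 :=
    (hχ.fderiv_right (m := (⊤ : ℕ∞)) (by simp)).differentiable (by simp) 0
  simpa using hd2.hasFDerivAt.isBigO_sub.norm_right

lemma Cc.transport {lam mu w : ℝ × ℝ → ℝ} {χ : ℝ × ℝ → ℝ × ℝ} {v v' : ℝ × ℝ} (h : Cc lam v)
    (hχ : ContDiff ℝ (⊤ : ℕ∞) χ) (h0 : χ 0 = 0) (hb : Function.Bijective (fderiv ℝ χ 0))
    (hv : fderiv ℝ χ 0 v' = v) (hw : DifferentiableAt ℝ w 0) (hw0 : w 0 ≠ 0)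
    (he : mu =ᶠ[𝓝 0] fun p => w p * lam (χ p)) : Cc mu v' := by
  obtain ⟨a, L, ha, hL, hLv, hO, c, hc, hγ⟩ := h
  have hχO := second_order hχ h0
  set A := fderiv ℝ χ 0 with hA
  have hid : (fun p : ℝ × ℝ => p) =O[𝓝 0] (fun p : ℝ × ℝ => ‖p‖) :=
    (isBigO_refl (fun p : ℝ × ℝ => p) _).norm_right
  have hχ1 : χ =O[𝓝 0] (fun p : ℝ × ℝ => ‖p‖) := by
    have := (hχ.differentiable (by simp) 0).hasFDerivAt.isBigO_sub
    simpa [h0] using this.norm_right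
  have hχt : Tendsto χ (𝓝 0) (𝓝 0) := by
    have := hχ.continuous.tendsto 0
    rwa [h0] at this
  have hw1 : (fun p => w p - w 0) =O[𝓝 0] (fun p : ℝ × ℝ => ‖p‖) := by
    have := hw.hasFDerivAt.isBigO_sub
    simpa using this.norm_right
  have hwb : w =O[𝓝 0] (fun _ => (1 : ℝ)) := hw.continuousAt.isBigO_one ℝ
  refine ⟨w 0 * a, L.comp A, mul_ne_zero hw0 ha, ?_, by simp [hv, hLv], ?_, w 0 * c,
    mul_ne_zero hw0 hc, ?_⟩
  · intro hz
    apply hL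
    ext1 <;> ext1
    · obtain ⟨q, hq⟩ := hb.2 (1, 0)
      have := congrArg (fun m => m q) hz
      simpa [hq] using this
    · obtain ⟨q, hq⟩ := hb.2 (0, 1)
      have := congrArg (fun m => m q) hz
      simpa [hq] using this
  · have T1 := hwb.mul ((hO.comp_tendsto hχt).trans
      (show (fun p => ‖χ p‖ ^ 3) =O[𝓝 0] (fun p : ℝ × ℝ => ‖p‖ ^ 3) from hχ1.norm_left.pow 3))
    have hL1 : (fun p => L (χ p)) =O[𝓝 0] (fun p : ℝ × ℝ => ‖p‖) := (L.isBigO_comp _ _).trans hχ1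
    have hL2 : (fun p => L (A p)) =O[𝓝 0] (fun p : ℝ × ℝ => ‖p‖) :=
      ((L.comp A).isBigO_comp (fun p => p) _).trans hid
    have hL3 : (fun p => L (χ p - A p)) =O[𝓝 0] (fun p : ℝ × ℝ => ‖p‖ ^ 2) :=
      (L.isBigO_comp _ _).trans hχO
    have T2 := (hw1.mul (hL1.mul hL1)).const_mul_left a
    have T3 := (hL3.mul (hL1.add hL2)).const_mul_left (w 0 * a)
    have T1' := T1.congr_right (g₂ := fun p => ‖p‖ ^ 3) fun p => by simp
    have T2' := T2.congr_right (g₂ := fun p => ‖p‖ ^ 3) fun p => by ring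
    have T3' := T3.congr_right (g₂ := fun p => ‖p‖ ^ 3) fun p => by ring
    refine ((T1'.add T2').add T3').congr' ?_ EventuallyEq.rfl
    filter_upwards [he] with p hp
    simp only [hp, Function.comp, map_sub, ContinuousLinearMap.comp_apply]
    ring
  · intro γ hg
    have hg1 := curve_bigO hg
    have hgt := curve_tendsto hg1
    have h1 : (fun t => χ (γ t) - t • v) =O[𝓝 0] (fun t : ℝ => t ^ 2) := by
      have a1 := (hχO.comp_tendsto hgt).trans
        (show (fun t => ‖γ t‖ ^ 2) =O[𝓝 0] (fun t : ℝ => t ^ 2) from hg1.norm_left.pow 2)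
      have a2 := (A.isBigO_comp (fun t => γ t - t • v') (𝓝 0)).trans hg
      exact (a1.add a2).congr_left fun t => by simp [hv]
    have h2 := hγ _ h1
    have hwγ : (fun t => w (γ t)) =O[𝓝 0] (fun _ => (1 : ℝ)) := hwb.comp_tendsto hgt
    have hwγ' : (fun t => w (γ t) - w 0) =o[𝓝 0] (fun _ => (1 : ℝ)) := by
      rw [isLittleO_one_iff]
      have : Tendsto (fun t => w (γ t)) (𝓝 0) (𝓝 (w 0)) := hw.continuousAt.tendsto.comp hgt
      simpa using this.sub_const (w 0)
    have T1 := (hwγ.mul_isLittleO h2).congr_right (g₂ := fun t => t ^ 3) fun t => by simp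
    have T2 := (hwγ'.mul_isBigO (isBigO_refl (fun t : ℝ => t ^ 3) (𝓝 0))).const_mul_left c
    have T2' := T2.congr_right (g₂ := fun t => t ^ 3) fun t => by simp
    refine (T1.add T2').congr' ?_ EventuallyEq.rfl
    filter_upwards [hgt.eventually he] with t ht
    simp only [ht]
    ring

/-- Taylor coefficient form of the condition -/
def Dd (lam : ℝ × ℝ → ℝ) (v : ℝ × ℝ) : Prop :=
  tcoeff lam 0 0 = 0 ∧ tcoeff lam 1 0 = 0 ∧ tcoeff lam 0 1 = 0 ∧
  (∃ a l1 l2 : ℝ, a ≠ 0 ∧ (l1 ≠ 0 ∨ l2 ≠ 0) ∧ l1 * v.1 + l2 * v.2 = 0 ∧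
    tcoeff lam 2 0 = a * l1 ^ 2 ∧ tcoeff lam 1 1 = 2 * a * l1 * l2 ∧ tcoeff lam 0 2 = a * l2 ^ 2) ∧
  tcoeff lam 3 0 * v.1 ^ 3 + tcoeff lam 2 1 * (v.1 ^ 2 * v.2) + tcoeff lam 1 2 * (v.1 * v.2 ^ 2)
    + tcoeff lam 0 3 * v.2 ^ 3 ≠ 0

lemma Dd.cc {lam : ℝ × ℝ → ℝ} {v : ℝ × ℝ} (hs : ContDiff ℝ (⊤ : ℕ∞) lam) (h : Dd lam v) :
    Cc lam v := by
  obtain ⟨h0, h1, h2, ⟨a, l1, l2, ha, hl, hlv, h20, h11, h02⟩, h3⟩ := h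
  have T := van_littleO 3 (taylor4 lam hs).1 (fun i hi => (taylor4 lam hs).2 i (by omega))
  let L : ℝ × ℝ →L[ℝ] ℝ := l1 • ContinuousLinearMap.fst ℝ ℝ ℝ + l2 • ContinuousLinearMap.snd ℝ ℝ ℝ
  have hL : ∀ p, L p = l1 * p.1 + l2 * p.2 := fun p => by simp [L]
  refine cc_of_taylor (a := a) (L := L) _ _ _ _ ha ?_ ?_ h3 ?_
  · intro hz
    have e1 := hL (1, 0)
    have e2 := hL (0, 1)
    simp [hz] at e1 e2
    rcases hl with hl | hl
    · exact hl e1.symm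
    · exact hl e2.symm
  · rw [hL, hlv]
  · refine T.congr_left fun p => ?_
    rw [h0, h1, h2, h20, h11, h02, hL]
    ring

lemma poly_zero {A B C : ℝ} (h : (fun t : ℝ => A + B * t + C * t ^ 2) =O[𝓝 0]
    (fun t : ℝ => t ^ 3)) : A = 0 ∧ B = 0 ∧ C = 0 := by
  have key : ∀ (n : ℕ) (K : ℝ), (fun t : ℝ => K * t ^ n) =o[𝓝 0] (fun t : ℝ => t ^ n) → K = 0 := by
    intro n K hK
    by_contra hne
    have : (fun t : ℝ => t ^ n) =o[𝓝 0] (fun t : ℝ => t ^ n) := by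
      have := hK.const_mul_left K⁻¹
      refine this.congr_left fun t => ?_
      field_simp
    have h2 := isLittleO_irrefl' (f' := fun t : ℝ => t ^ n) (l := 𝓝[≠] (0 : ℝ))
      (Eventually.frequently (by
        filter_upwards [self_mem_nhdsWithin] with t ht
        exact norm_ne_zero_iff.2 (pow_ne_zero n ht)))
    exact h2 (this.mono nhdsWithin_le_nhds)
  have A0 : A = 0 := by
    apply key 0
    have h1 := h.trans_isLittleO (t_pow_isLittleO (show 0 < 3 by norm_num))
    have h2 : (fun t : ℝ => B * t ^ 1) =o[𝓝 0] (fun t : ℝ => t ^ 0) :=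
      (t_pow_isLittleO (by norm_num)).const_mul_left B
    have h3 : (fun t : ℝ => C * t ^ 2) =o[𝓝 0] (fun t : ℝ => t ^ 0) :=
      (t_pow_isLittleO (by norm_num)).const_mul_left C
    exact ((h1.sub h2).sub h3).congr_left fun t => by ring
  subst A0
  have B0 : B = 0 := by
    apply key 1
    have h1 := h.trans_isLittleO (t_pow_isLittleO (show 1 < 3 by norm_num))
    have h3 : (fun t : ℝ => C * t ^ 2) =o[𝓝 0] (fun t : ℝ => t ^ 1) :=
      (t_pow_isLittleO (by norm_num)).const_mul_left C
    exact (h1.sub h3).congr_left fun t => by ring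
  subst B0
  refine ⟨rfl, rfl, key 2 C ?_⟩
  exact (h.trans_isLittleO (t_pow_isLittleO (show 2 < 3 by norm_num))).congr_left fun t => by ring

lemma Cc.dd {lam : ℝ × ℝ → ℝ} {v : ℝ × ℝ} (hs : ContDiff ℝ (⊤ : ℕ∞) lam) (h : Cc lam v) :
    Dd lam v := by
  obtain ⟨a, L, ha, hL, hLv, hO, c, hc, hγ⟩ := h
  have T := van_littleO 3 (taylor4 lam hs).1 (fun i hi => (taylor4 lam hs).2 i (by omega))
  have hline : ∀ u : ℝ × ℝ, (fun t : ℝ => ‖t • u‖ ^ 3) =O[𝓝 0] (fun t : ℝ => t ^ 3) := by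
    intro u
    refine IsBigO.pow (f := fun t : ℝ => ‖t • u‖) (g := fun t : ℝ => t) ?_ 3
    refine IsBigO.of_bound ‖u‖ (Eventually.of_forall fun t => ?_)
    rw [norm_norm, norm_smul, mul_comm]
  have htend : ∀ u : ℝ × ℝ, Tendsto (fun t : ℝ => t • u) (𝓝 0) (𝓝 0) := by
    intro u
    have : Continuous (fun t : ℝ => t • u) := by fun_prop
    simpa using this.tendsto 0
  obtain ⟨l1, hl1⟩ : ∃ l1, L (1, 0) = l1 := ⟨_, rfl⟩
  obtain ⟨l2, hl2⟩ : ∃ l2, L (0, 1) = l2 := ⟨_, rfl⟩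
  have hLe : ∀ p : ℝ × ℝ, L p = l1 * p.1 + l2 * p.2 := by
    intro p
    have : p = p.1 • ((1, 0) : ℝ × ℝ) + p.2 • ((0, 1) : ℝ × ℝ) := by ext <;> simp
    conv_lhs => rw [this]
    rw [map_add, map_smul, map_smul, hl1, hl2]
    simp [mul_comm]
  have key : ∀ u : ℝ × ℝ, tcoeff lam 0 0 = 0 ∧ tcoeff lam 1 0 * u.1 + tcoeff lam 0 1 * u.2 = 0 ∧
      tcoeff lam 2 0 * u.1 ^ 2 + tcoeff lam 1 1 * (u.1 * u.2) + tcoeff lam 0 2 * u.2 ^ 2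
        - a * (l1 * u.1 + l2 * u.2) ^ 2 = 0 := by
    intro u
    apply poly_zero
    have h1 := (T.isBigO.comp_tendsto (htend u)).trans (hline u)
    have h2 := (hO.comp_tendsto (htend u)).trans (hline u)
    have h3 : (fun t : ℝ => (tcoeff lam 3 0 * u.1 ^ 3 + tcoeff lam 2 1 * (u.1 ^ 2 * u.2)
      + tcoeff lam 1 2 * (u.1 * u.2 ^ 2) + tcoeff lam 0 3 * u.2 ^ 3) * t ^ 3) =O[𝓝 0]
        (fun t : ℝ => t ^ 3) := (isBigO_refl _ _).const_mul_left _
    refine ((h2.sub h1).sub h3).congr_left fun t => ?_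
    simp only [Function.comp, hLe, Prod.smul_fst, Prod.smul_snd, smul_eq_mul]
    ring
  have k1 := key (1, 0)
  have k2 := key (0, 1)
  have k3 := key (1, 1)
  simp only at k1 k2 k3
  have c00 := k1.1
  have c10 : tcoeff lam 1 0 = 0 := by linarith [k1.2.1]
  have c01 : tcoeff lam 0 1 = 0 := by linarith [k2.2.1]
  have c20 : tcoeff lam 2 0 = a * l1 ^ 2 := by linarith [k1.2.2]
  have c02 : tcoeff lam 0 2 = a * l2 ^ 2 := by linarith [k2.2.2]
  have c11 : tcoeff lam 1 1 = 2 * a * l1 * l2 := by linarith [k3.2.2]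
  refine ⟨c00, c10, c01, ⟨a, l1, l2, ha, ?_, by rw [← hLe, hLv], c20, c11, c02⟩, ?_⟩
  · by_contra hcon
    push Not at hcon
    apply hL
    refine ContinuousLinearMap.ext fun p => ?_
    rw [hLe, hcon.1, hcon.2]; simp
  · intro hz
    apply hc
    have h1 := (T.comp_tendsto (htend v)).trans_isBigO (hline v)
    have h2 := hγ (fun t => t • v) (by simpa using isBigO_zero _ _)
    have h3 : (fun t : ℝ => c * t ^ 3) =o[𝓝 0] (fun t : ℝ => t ^ 3) := by
      refine (h1.sub h2).congr_left fun t => ?_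
      have hlv : l1 * v.1 + l2 * v.2 = 0 := by rw [← hLe, hLv]
      simp only [Function.comp, Prod.smul_fst, Prod.smul_snd, smul_eq_mul, c00, c10, c01, c20, c11,
        c02]
      linear_combination (-(a * t ^ 2 * (l1 * v.1 + l2 * v.2))) * hlv - t ^ 3 * hz
    by_contra hne
    have h4 : (fun t : ℝ => t ^ 3) =o[𝓝 0] (fun t : ℝ => t ^ 3) := by
      refine (h3.const_mul_left c⁻¹).congr_left fun t => ?_
      field_simp
    have h5 := isLittleO_irrefl' (f' := fun t : ℝ => t ^ 3) (l := 𝓝[≠] (0 : ℝ))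
      (Eventually.frequently (by
        filter_upwards [self_mem_nhdsWithin] with t ht
        exact norm_ne_zero_iff.2 (pow_ne_zero 3 ht)))
    exact h5 (h4.mono nhdsWithin_le_nhds)

lemma exists_inverse {Φ : ℝ × ℝ → ℝ × ℝ} (hΦ : ContDiff ℝ (⊤ : ℕ∞) Φ) (h0 : Φ 0 = 0)
    (hb : Function.Bijective (fderiv ℝ Φ 0)) :
    ∃ χ : ℝ × ℝ → ℝ × ℝ, ContDiff ℝ (⊤ : ℕ∞) χ ∧ χ 0 = 0 ∧ (∀ᶠ p in 𝓝 0, Φ (χ p) = p) ∧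
      (∀ᶠ p in 𝓝 0, χ (Φ p) = p) := by
  let A : (ℝ × ℝ) ≃L[ℝ] (ℝ × ℝ) := ContinuousLinearEquiv.ofBijective (fderiv ℝ Φ 0)
    (LinearMap.ker_eq_bot.2 hb.1) (LinearMap.range_eq_top.2 hb.2)
  have hA : (A : (ℝ × ℝ) →L[ℝ] (ℝ × ℝ)) = fderiv ℝ Φ 0 := by ext1 <;> rfl
  have hs : HasStrictFDerivAt Φ (A : (ℝ × ℝ) →L[ℝ] (ℝ × ℝ)) 0 := by
    rw [hA]
    exact hΦ.contDiffAt.hasStrictFDerivAt (by simp)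
  set e := hs.toOpenPartialHomeomorph Φ with he
  have hsm : ∀ᶠ p in 𝓝 (0 : ℝ × ℝ), ContDiffAt ℝ (⊤ : ℕ∞) e.symm p := by
    have h1 : ∀ᶠ p in 𝓝 (0 : ℝ × ℝ), p ∈ e.target := by
      have := hs.image_mem_toOpenPartialHomeomorph_target
      rw [h0] at this
      exact e.open_target.mem_nhds this
    have h2 : ∀ᶠ q in 𝓝 (0 : ℝ × ℝ), ∃ B : (ℝ × ℝ) ≃L[ℝ] (ℝ × ℝ), (B : _ →L[ℝ] _) =
        fderiv ℝ Φ q := by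
      have hc : Tendsto (fderiv ℝ Φ) (𝓝 0) (𝓝 (A : (ℝ × ℝ) →L[ℝ] (ℝ × ℝ))) := by
        rw [hA]
        exact (hΦ.continuous_fderiv (by simp)).tendsto 0
      exact hc.eventually A.nhds
    have h3 : Tendsto e.symm (𝓝 0) (𝓝 0) := by
      have := hs.localInverse_tendsto
      rwa [h0] at this
    filter_upwards [h1, h3.eventually h2] with p hp1 ⟨B, hB⟩
    refine e.contDiffAt_symm (f₀' := B) hp1 ?_ ?_
    · rw [hB]
      exact (hΦ.differentiable (by simp) _).hasFDerivAt
    · exact hΦ.contDiffAt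
  obtain ⟨ε, hε, hball⟩ := Metric.eventually_nhds_iff_ball.1 hsm
  let b : ContDiffBump (0 : ℝ × ℝ) := ⟨ε / 3, ε / 2, by positivity, by linarith⟩
  let χ : ℝ × ℝ → ℝ × ℝ := fun p => b p • e.symm p
  have hχe : χ =ᶠ[𝓝 0] e.symm := by
    filter_upwards [b.eventuallyEq_one] with p hp
    simp [χ, hp]
  have hL := hs.eventually_left_inverse
  have hR := hs.eventually_right_inverse
  rw [h0] at hR
  have hχ0 : χ 0 = 0 := by
    rw [hχe.self_of_nhds]
    have := hL.self_of_nhds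
    rw [h0] at this
    exact this
  refine ⟨χ, ?_, hχ0, ?_, ?_⟩
  · rw [contDiff_iff_contDiffAt]
    intro p
    by_cases hp : p ∈ Metric.ball (0 : ℝ × ℝ) ε
    · exact b.contDiff.contDiffAt.smul (hball p hp)
    · have : p ∉ tsupport b := by
        rw [b.tsupport_eq]
        simp [b] at hp ⊢
        linarith
      have h2 : χ =ᶠ[𝓝 p] fun _ => 0 := by
        filter_upwards [notMem_tsupport_iff_eventuallyEq.1 this] with q hq
        simp [χ, hq]
      exact contDiffAt_const.congr_of_eventuallyEq h2
  · filter_upwards [hR, hχe] with p hp hq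
    rw [hq]
    exact hp
  · have ht : Tendsto Φ (𝓝 0) (𝓝 0) := by
      have := hΦ.continuous.tendsto 0
      rwa [h0] at this
    filter_upwards [hL, ht.eventually hχe] with p hp hq
    rw [hq]
    exact hp

lemma fderiv_comp_id {Φ χ : ℝ × ℝ → ℝ × ℝ} (hΦ : ContDiff ℝ (⊤ : ℕ∞) Φ)
    (hχ : ContDiff ℝ (⊤ : ℕ∞) χ) (h0 : χ 0 = 0) (h : ∀ᶠ p in 𝓝 0, Φ (χ p) = p) (u : ℝ × ℝ) :
    fderiv ℝ Φ 0 (fderiv ℝ χ 0 u) = u := by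
  have h1 : (Φ ∘ χ) =ᶠ[𝓝 0] id := h
  have h2 := h1.fderiv_eq (𝕜 := ℝ)
  rw [fderiv_comp 0 (hΦ.differentiable (by simp) _) (hχ.differentiable (by simp) _), h0,
    fderiv_id] at h2
  exact congrArg (fun m => m u) h2

lemma fderiv_pair_decomp (g : ℝ × ℝ → ℝ × ℝ) (p v : ℝ × ℝ) :
    fderiv ℝ g p v = v.1 • fderiv ℝ g p (1, 0) + v.2 • fderiv ℝ g p (0, 1) := by
  have : v = v.1 • ((1, 0) : ℝ × ℝ) + v.2 • ((0, 1) : ℝ × ℝ) := by ext <;> simp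
  conv_lhs => rw [this]
  rw [map_add, map_smul, map_smul]

lemma jacDet_comp {g f : ℝ × ℝ → ℝ × ℝ} (hg : ContDiff ℝ (⊤ : ℕ∞) g)
    (hf : ContDiff ℝ (⊤ : ℕ∞) f) (p : ℝ × ℝ) :
    jacDet (g ∘ f) p = jacDet g (f p) * jacDet f p := by
  unfold jacDet
  rw [fderiv_comp p (hg.differentiable (by simp) _) (hf.differentiable (by simp) _)]
  simp only [ContinuousLinearMap.comp_apply]
  rw [fderiv_pair_decomp g (f p) (fderiv ℝ f p (1, 0)),
    fderiv_pair_decomp g (f p) (fderiv ℝ f p (0, 1))]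
  simp only [Prod.fst_add, Prod.snd_add, Prod.smul_fst, Prod.smul_snd, smul_eq_mul]
  ring

lemma jacDet_smooth {f : ℝ × ℝ → ℝ × ℝ} (hf : ContDiff ℝ (⊤ : ℕ∞) f) :
    ContDiff ℝ (⊤ : ℕ∞) (jacDet f) := by
  have h : ContDiff ℝ (⊤ : ℕ∞) (fderiv ℝ f) := hf.fderiv_right (by simp)
  have h1 := h.clm_apply (contDiff_const (c := ((1, 0) : ℝ × ℝ)))
  have h2 := h.clm_apply (contDiff_const (c := ((0, 1) : ℝ × ℝ)))
  exact (h1.fst.mul h2.snd).sub (h1.snd.mul h2.fst)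

lemma jacDet_congr {f g : ℝ × ℝ → ℝ × ℝ} {p : ℝ × ℝ} (h : f =ᶠ[𝓝 p] g) :
    jacDet f p = jacDet g p := by
  unfold jacDet; rw [h.fderiv_eq]

lemma jacDet_ne {φ : ℝ × ℝ → ℝ × ℝ} (hφ : ContDiff ℝ (⊤ : ℕ∞) φ) (h0 : φ 0 = 0)
    (hb : Function.Bijective (fderiv ℝ φ 0)) : jacDet φ 0 ≠ 0 := by
  obtain ⟨χ, hχ, hχ0, -, h2⟩ := exists_inverse hφ h0 hb
  have h3 : (χ ∘ φ) =ᶠ[𝓝 0] id := h2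
  have h4 := jacDet_congr h3
  rw [jacDet_comp hχ hφ, h0] at h4
  have h5 : jacDet id 0 = 1 := by simp [jacDet]
  rw [h5] at h4
  intro h; rw [h] at h4; simp at h4

lemma bij_of_jacDet {φ : ℝ × ℝ → ℝ × ℝ} (h : jacDet φ 0 ≠ 0) :
    Function.Bijective (fderiv ℝ φ 0) := by
  have hinj : Function.Injective ((fderiv ℝ φ 0).toLinearMap) := by
    rw [injective_iff_map_eq_zero]
    intro v hv
    have hv' : fderiv ℝ φ 0 v = 0 := hv
    rw [fderiv_pair_decomp] at hv'
    unfold jacDet at h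
    have e1 := congrArg Prod.fst hv'
    have e2 := congrArg Prod.snd hv'
    simp only [Prod.fst_add, Prod.snd_add, Prod.smul_fst, Prod.smul_snd, smul_eq_mul,
      Prod.fst_zero, Prod.snd_zero] at e1 e2
    set a := (fderiv ℝ φ 0 (1, 0)).1
    set b := (fderiv ℝ φ 0 (0, 1)).1
    set c := (fderiv ℝ φ 0 (1, 0)).2
    set d := (fderiv ℝ φ 0 (0, 1)).2
    have x1 : v.1 = 0 := by
      have : (a * d - c * b) * v.1 = 0 := by linear_combination d * e1 - b * e2
      exact (mul_eq_zero.1 this).resolve_left h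
    have x2 : v.2 = 0 := by
      have : (a * d - c * b) * v.2 = 0 := by linear_combination a * e2 - c * e1
      exact (mul_eq_zero.1 this).resolve_left h
    exact Prod.ext x1 x2
  exact ⟨hinj, LinearMap.injective_iff_surjective.1 hinj⟩

lemma corank_facts {f : ℝ × ℝ → ℝ × ℝ} (h : CorankOne f) :
    jacDet f 0 = 0 ∧ fderiv ℝ f 0 ≠ 0 := by
  unfold CorankOne at h
  constructor
  · by_contra hne
    have hb := bij_of_jacDet hne
    have : LinearMap.rank ((fderiv ℝ f 0).toLinearMap) = 2 := by
      unfold LinearMap.rank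
      rw [rank_range_of_injective _ hb.1]
      simp [one_add_one_eq_two]
    rw [this] at h
    norm_num at h
  · intro h0
    rw [h0] at h
    simp at h

lemma hess_rank (A B C : ℝ) (h : (!![A, B; B, C] : Matrix (Fin 2) (Fin 2) ℝ).rank = 1) :
    A * C = B * B ∧ ¬ (A = 0 ∧ B = 0 ∧ C = 0) := by
  constructor
  · by_contra hne
    have hd : IsUnit (!![A, B; B, C] : Matrix (Fin 2) (Fin 2) ℝ).det := by
      rw [Matrix.det_fin_two_of]
      exact isUnit_iff_ne_zero.2 (sub_ne_zero.2 hne)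
    have := Matrix.rank_of_isUnit _ ((Matrix.isUnit_iff_isUnit_det _).2 hd)
    rw [this] at h
    simp at h
  · rintro ⟨rfl, rfl, rfl⟩
    have : (!![0, 0; 0, 0] : Matrix (Fin 2) (Fin 2) ℝ) = 0 := by
      ext i j; fin_cases i <;> fin_cases j <;> rfl
    rw [this, Matrix.rank_zero] at h
    simp at h

lemma rank_hess (a l1 l2 : ℝ) (ha : a ≠ 0) (hl : l1 ≠ 0 ∨ l2 ≠ 0) :
    (!![a * l1 ^ 2, a * l1 * l2; a * l1 * l2, a * l2 ^ 2] : Matrix (Fin 2) (Fin 2) ℝ).rank = 1 := by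
  have e : (!![a * l1 ^ 2, a * l1 * l2; a * l1 * l2, a * l2 ^ 2] : Matrix (Fin 2) (Fin 2) ℝ) =
      Matrix.vecMulVec ![a * l1, a * l2] ![l1, l2] := by
    ext i j; fin_cases i <;> fin_cases j <;> simp [Matrix.vecMulVec_apply] <;> ring
  apply le_antisymm
  · rw [e]; exact Matrix.rank_vecMulVec_le _ _
  · rw [Nat.one_le_iff_ne_zero]
    intro h0
    rw [Matrix.rank, Submodule.finrank_eq_zero, LinearMap.range_eq_bot] at h0
    have h1 := congrArg (fun m => m ![1, 0]) h0
    have h2 := congrArg (fun m => m ![0, 1]) h0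
    have h11 := congrFun h1 0
    have h22 := congrFun h2 1
    simp [Matrix.mulVec, Matrix.vecHead, Matrix.vecTail] at h11 h22
    rcases hl with hl | hl
    · exact hl (h11.resolve_left ha)
    · exact hl (h22.resolve_left ha)

lemma dop_mul' {a b : ℝ × ℝ → ℝ} {p : ℝ × ℝ} (u : ℝ × ℝ) (ha : DifferentiableAt ℝ a p)
    (hb : DifferentiableAt ℝ b p) :
    dop u (fun q => a q * b q) p = dop u a p * b p + a p * dop u b p := by
  have := (ha.hasFDerivAt.mul hb.hasFDerivAt).fderiv
  unfold dop
  change fderiv ℝ (a * b) p u = _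
  rw [this]
  simp
  ring

lemma dop_add' {a b : ℝ × ℝ → ℝ} {p : ℝ × ℝ} (u : ℝ × ℝ) (ha : DifferentiableAt ℝ a p)
    (hb : DifferentiableAt ℝ b p) :
    dop u (fun q => a q + b q) p = dop u a p + dop u b p := by
  have := (ha.hasFDerivAt.add hb.hasFDerivAt).fderiv
  unfold dop
  change fderiv ℝ (a + b) p u = _
  rw [this]
  simp

lemma dop_decomp (v : ℝ × ℝ) (g : ℝ × ℝ → ℝ) (p : ℝ × ℝ) :
    dop v g p = v.1 * pdx g p + v.2 * pdy g p := fderiv_decomp g p v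

lemma dop_congr {a b : ℝ × ℝ → ℝ} {p : ℝ × ℝ} (u : ℝ × ℝ) (h : a =ᶠ[𝓝 p] b) :
    dop u a p = dop u b p := by
  unfold dop; rw [h.fderiv_eq]

lemma dop_contDiffAt {a : ℝ × ℝ → ℝ} {p : ℝ × ℝ} (u : ℝ × ℝ)
    (ha : ContDiffAt ℝ (⊤ : ℕ∞) a p) : ContDiffAt ℝ (⊤ : ℕ∞) (dop u a) p :=
  (ha.fderiv_right (m := (⊤ : ℕ∞)) (by simp)).clm_apply contDiffAt_const

/-- the second iterated derivative along a vector field -/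
def E2 (A B P Q l : ℝ × ℝ → ℝ) : ℝ × ℝ → ℝ := fun p =>
  (P p * pdx l p + Q p * pdy l p) +
    (((A p * A p) * pdx (pdx l) p + (2 * A p * B p) * pdx (pdy l) p) + (B p * B p) * pdy (pdy l) p)

lemma eta_two {η : ℝ × ℝ → ℝ × ℝ} {l : ℝ × ℝ → ℝ} (hl : ContDiff ℝ (⊤ : ℕ∞) l) {p : ℝ × ℝ}
    (hη : ContDiffAt ℝ (⊤ : ℕ∞) η p) :
    etaIter η 2 l p = E2 (fun q => (η q).1) (fun q => (η q).2)
      (fun q => dop (η q) (fun q => (η q).1) q) (fun q => dop (η q) (fun q => (η q).2) q) l p := by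
  have hA : DifferentiableAt ℝ (fun q => (η q).1) p := (hη.differentiableAt (by simp)).fst
  have hB : DifferentiableAt ℝ (fun q => (η q).2) p := (hη.differentiableAt (by simp)).snd
  have hx : DifferentiableAt ℝ (pdx l) p := (pdx_smooth hl).differentiable (by simp) p
  have hy : DifferentiableAt ℝ (pdy l) p := (pdy_smooth hl).differentiable (by simp) p
  have e1 : etaIter η 1 l = fun q => (η q).1 * pdx l q + (η q).2 * pdy l q := by
    funext q; exact fderiv_decomp l q (η q)
  change dop (η p) (etaIter η 1 l) p = _
  rw [e1, dop_add' _ (hA.fun_mul hx) (hB.fun_mul hy), dop_mul' _ hA hx, dop_mul' _ hB hy,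
    dop_decomp _ (pdx l), dop_decomp _ (pdy l), pdxy hl]
  unfold E2; beta_reduce
  ring

lemma eta_three {η : ℝ × ℝ → ℝ × ℝ} {l : ℝ × ℝ → ℝ} (hl : ContDiff ℝ (⊤ : ℕ∞) l)
    (hη : ∀ᶠ p in 𝓝 0, ContDiffAt ℝ (⊤ : ℕ∞) η p) (hx0 : pdx l 0 = 0) (hy0 : pdy l 0 = 0) :
    ∃ P Q : ℝ, etaIter η 3 l 0 =
      3 * P * ((η 0).1 * pdx (pdx l) 0 + (η 0).2 * pdx (pdy l) 0) +
      3 * Q * ((η 0).1 * pdx (pdy l) 0 + (η 0).2 * pdy (pdy l) 0) +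
      ((η 0).1 ^ 3 * pdx (pdx (pdx l)) 0 + 3 * (η 0).1 ^ 2 * (η 0).2 * pdx (pdx (pdy l)) 0 +
       3 * (η 0).1 * (η 0).2 ^ 2 * pdx (pdy (pdy l)) 0 + (η 0).2 ^ 3 * pdy (pdy (pdy l)) 0) := by
  have h0 := hη.self_of_nhds
  have cA : ContDiffAt ℝ (⊤ : ℕ∞) (fun q => (η q).1) 0 := h0.fst
  have cB : ContDiffAt ℝ (⊤ : ℕ∞) (fun q => (η q).2) 0 := h0.snd
  have hA : DifferentiableAt ℝ (fun q => (η q).1) 0 := cA.differentiableAt (by simp)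
  have hB : DifferentiableAt ℝ (fun q => (η q).2) 0 := cB.differentiableAt (by simp)
  have hP : DifferentiableAt ℝ (fun q => dop (η q) (fun q => (η q).1) q) 0 :=
    ((cA.fderiv_right (m := (⊤ : ℕ∞)) (by simp)).clm_apply h0).differentiableAt (by simp)
  have hQ : DifferentiableAt ℝ (fun q => dop (η q) (fun q => (η q).2) q) 0 :=
    ((cB.fderiv_right (m := (⊤ : ℕ∞)) (by simp)).clm_apply h0).differentiableAt (by simp)
  have sx := pdx_smooth hl
  have sy := pdy_smooth hl
  have df : ∀ {g : ℝ × ℝ → ℝ}, ContDiff ℝ (⊤ : ℕ∞) g → DifferentiableAt ℝ g 0 :=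
    fun h => h.differentiable (by simp) 0
  have dx := df sx
  have dy := df sy
  have dxx := df (pdx_smooth sx)
  have dxy := df (pdx_smooth sy)
  have dyy := df (pdy_smooth sy)
  refine ⟨dop (η 0) (fun q => (η q).1) 0, dop (η 0) (fun q => (η q).2) 0, ?_⟩
  change dop (η 0) (etaIter η 2 l) 0 = _
  rw [dop_congr (η 0) (hη.mono fun p hp => eta_two hl hp)]
  unfold E2; beta_reduce
  have h2 : DifferentiableAt ℝ (fun q => 2 * (η q).1) 0 := hA.const_mul 2
  have e2 : dop (η 0) (fun q => 2 * (η q).1) 0 = 2 * dop (η 0) (fun q => (η q).1) 0 := by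
    rw [dop_mul' _ (differentiableAt_const _) hA]; simp [dop]
  rw [dop_add' _ ((hP.fun_mul dx).fun_add (hQ.fun_mul dy)) ((((hA.fun_mul hA).fun_mul dxx).fun_add ((h2.fun_mul hB).fun_mul dxy)).fun_add
      ((hB.fun_mul hB).fun_mul dyy)),
    dop_add' _ (hP.fun_mul dx) (hQ.fun_mul dy), dop_mul' _ hP dx, dop_mul' _ hQ dy,
    dop_add' _ (((hA.fun_mul hA).fun_mul dxx).fun_add ((h2.fun_mul hB).fun_mul dxy)) ((hB.fun_mul hB).fun_mul dyy),
    dop_add' _ ((hA.fun_mul hA).fun_mul dxx) ((h2.fun_mul hB).fun_mul dxy),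
    dop_mul' _ (hA.fun_mul hA) dxx, dop_mul' _ (h2.fun_mul hB) dxy, dop_mul' _ (hB.fun_mul hB) dyy,
    dop_mul' _ hA hA, dop_mul' _ hB hB, dop_mul' _ h2 hB, e2,
    dop_decomp _ (pdx l), dop_decomp _ (pdy l), dop_decomp _ (pdx (pdx l)),
    dop_decomp _ (pdx (pdy l)), dop_decomp _ (pdy (pdy l)), hx0, hy0, pdxy hl, pdxy sx, pdxy sy,
    pdxy hl]
  ring

lemma conditions_iff {η : ℝ × ℝ → ℝ × ℝ} {l : ℝ × ℝ → ℝ} (hl : ContDiff ℝ (⊤ : ℕ∞) l)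
    (hη : ∀ᶠ p in 𝓝 0, ContDiffAt ℝ (⊤ : ℕ∞) η p) (hl0 : l 0 = 0) :
    (fderiv ℝ l 0 = 0 ∧ (hess l).rank = 1 ∧ etaIter η 2 l 0 = 0 ∧ etaIter η 3 l 0 ≠ 0) ↔
      Dd l (η 0) := by
  have hxy := pdxy hl
  have hhess : hess l = !![pdx (pdx l) 0, pdx (pdy l) 0; pdx (pdy l) 0, pdy (pdy l) 0] := by
    unfold hess; rw [hxy]
  have t00 : tcoeff l 0 0 = 0 := by simp [tcoeff, hl0]
  have t10 : tcoeff l 1 0 = pdx l 0 := by simp [tcoeff]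
  have t01 : tcoeff l 0 1 = pdy l 0 := by simp [tcoeff]
  have t20 : tcoeff l 2 0 = pdx (pdx l) 0 / 2 := by simp [tcoeff]
  have t11 : tcoeff l 1 1 = pdx (pdy l) 0 := by simp [tcoeff]
  have t02 : tcoeff l 0 2 = pdy (pdy l) 0 / 2 := by simp [tcoeff]
  have t30 : tcoeff l 3 0 = pdx (pdx (pdx l)) 0 / 6 := by
    simp [tcoeff, Nat.factorial]
  have t21 : tcoeff l 2 1 = pdx (pdx (pdy l)) 0 / 2 := by
    simp [tcoeff, Nat.factorial]
  have t12 : tcoeff l 1 2 = pdx (pdy (pdy l)) 0 / 2 := by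
    simp [tcoeff, Nat.factorial]
  have t03 : tcoeff l 0 3 = pdy (pdy (pdy l)) 0 / 6 := by
    simp [tcoeff, Nat.factorial]
  have e2 := eta_two hl hη.self_of_nhds
  unfold E2 at e2
  have e3 := eta_three hl hη
  unfold Dd
  rw [t00, t10, t01, t20, t11, t02, t30, t21, t12, t03, hhess]
  rw [e2]
  set v := η 0 with hv
  set A := pdx (pdx l) 0
  set B := pdx (pdy l) 0
  set C := pdy (pdy l) 0
  constructor
  · rintro ⟨h1, h2, h3, h4⟩
    have hx0 : pdx l 0 = 0 := by unfold pdx dop; rw [h1]; simp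
    have hy0 : pdy l 0 = 0 := by unfold pdy dop; rw [h1]; simp
    obtain ⟨P, Q, e⟩ := e3 hx0 hy0
    obtain ⟨r1, r2⟩ := hess_rank A B C h2
    rw [hx0, hy0] at h3
    simp only [mul_zero, zero_add] at h3
    rw [e] at h4
    have k1 : A * v.1 + B * v.2 = 0 := by
      have : (A * v.1 + B * v.2) ^ 2 = 0 := by linear_combination A * h3 - v.2 ^ 2 * r1
      exact pow_eq_zero_iff (two_ne_zero) |>.1 this
    have k2 : B * v.1 + C * v.2 = 0 := by
      have : (B * v.1 + C * v.2) ^ 2 = 0 := by linear_combination C * h3 - v.1 ^ 2 * r1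
      exact pow_eq_zero_iff (two_ne_zero) |>.1 this
    refine ⟨rfl, hx0, hy0, ?_, ?_⟩
    · by_cases hA : A = 0
      · have hB : B = 0 := by
          rw [hA, zero_mul] at r1; exact mul_self_eq_zero.1 r1.symm
        have hC : C ≠ 0 := fun h => r2 ⟨hA, hB, h⟩
        refine ⟨1 / (2 * C), 0, C, by positivity, Or.inr hC, ?_, ?_, ?_, ?_⟩
        · rw [hB] at k2; linear_combination k2
        · rw [hA]; ring
        · rw [hB]; ring
        · field_simp
      · refine ⟨1 / (2 * A), A, B, by positivity, Or.inl hA, k1, ?_, ?_, ?_⟩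
        · field_simp
        · field_simp
        · field_simp; linear_combination r1
    · intro h
      apply h4
      linear_combination 3 * P * k1 + 3 * Q * k2 + 6 * h
  · rintro ⟨-, hx0, hy0, ⟨a, l1, l2, ha, hl12, hk, q1, q2, q3⟩, hc⟩
    obtain ⟨P, Q, e⟩ := e3 hx0 hy0
    have eA : A = (2 * a) * l1 ^ 2 := by linear_combination 2 * q1
    have eB : B = (2 * a) * l1 * l2 := by linear_combination q2
    have eC : C = (2 * a) * l2 ^ 2 := by linear_combination 2 * q3
    refine ⟨?_, ?_, ?_, ?_⟩
    · apply ContinuousLinearMap.ext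
      intro u
      rw [fderiv_decomp, hx0, hy0]; simp
    · rw [eA, eB, eC]; exact rank_hess _ _ _ (by positivity) hl12
    · rw [hx0, hy0, eA, eB, eC]
      linear_combination 2 * a * (l1 * v.1 + l2 * v.2) * hk
    · rw [e]
      intro h
      apply hc
      rw [eA, eB, eC] at h
      linear_combination (1 / 6) * h - P * a * l1 * hk - Q * a * l2 * hk

lemma jac_diff {F g : ℝ × ℝ → ℝ × ℝ} (hF : ContDiff ℝ (⊤ : ℕ∞) F) (hg : ContDiff ℝ (⊤ : ℕ∞) g)
    (h : (fun p => fderiv ℝ F p - fderiv ℝ g p) =o[𝓝 0] (fun p : ℝ × ℝ => ‖p‖ ^ 3)) :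
    (fun p => jacDet F p - jacDet g p) =o[𝓝 0] (fun p : ℝ × ℝ => ‖p‖ ^ 3) := by
  have hu : ∀ u : ℝ × ℝ, (fun p => fderiv ℝ F p u - fderiv ℝ g p u) =o[𝓝 0]
      (fun p : ℝ × ℝ => ‖p‖ ^ 3) := fun u => by
    refine IsBigO.trans_isLittleO (IsBigO.of_bound ‖u‖ (Eventually.of_forall fun p => ?_)) h
    rw [mul_comm]
    exact (fderiv ℝ F p - fderiv ℝ g p).le_opNorm u
  have h1 : ∀ u : ℝ × ℝ, (fun p => (fderiv ℝ F p u).1 - (fderiv ℝ g p u).1) =o[𝓝 0]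
      (fun p : ℝ × ℝ => ‖p‖ ^ 3) := fun u =>
    IsBigO.trans_isLittleO (IsBigO.of_bound 1 (Eventually.of_forall fun p => by
      rw [one_mul]; exact norm_fst_le (fderiv ℝ F p u - fderiv ℝ g p u))) (hu u)
  have h2 : ∀ u : ℝ × ℝ, (fun p => (fderiv ℝ F p u).2 - (fderiv ℝ g p u).2) =o[𝓝 0]
      (fun p : ℝ × ℝ => ‖p‖ ^ 3) := fun u =>
    IsBigO.trans_isLittleO (IsBigO.of_bound 1 (Eventually.of_forall fun p => by
      rw [one_mul]; exact norm_snd_le (fderiv ℝ F p u - fderiv ℝ g p u))) (hu u)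
  have c : ∀ {k : ℝ × ℝ → ℝ × ℝ}, ContDiff ℝ (⊤ : ℕ∞) k → ∀ u : ℝ × ℝ,
      Continuous (fun p => fderiv ℝ k p u) := fun hk u =>
    (hk.continuous_fderiv (by simp)).clm_apply continuous_const
  have b1 : ∀ {k : ℝ × ℝ → ℝ × ℝ}, ContDiff ℝ (⊤ : ℕ∞) k → ∀ u : ℝ × ℝ,
      (fun p => (fderiv ℝ k p u).1) =O[𝓝 0] (fun _ : ℝ × ℝ => (1 : ℝ)) := fun hk u =>
    ((c hk u).fst.tendsto 0).isBigO_one ℝ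
  have b2 : ∀ {k : ℝ × ℝ → ℝ × ℝ}, ContDiff ℝ (⊤ : ℕ∞) k → ∀ u : ℝ × ℝ,
      (fun p => (fderiv ℝ k p u).2) =O[𝓝 0] (fun _ : ℝ × ℝ => (1 : ℝ)) := fun hk u =>
    ((c hk u).snd.tendsto 0).isBigO_one ℝ
  have M1 := (h1 (1, 0)).mul_isBigO (b2 hF (0, 1))
  have M2 := (h2 (0, 1)).mul_isBigO (b1 hg (1, 0))
  have M3 := (h2 (1, 0)).mul_isBigO (b1 hF (0, 1))
  have M4 := (h1 (0, 1)).mul_isBigO (b2 hg (1, 0))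
  have := ((M1.add M2).sub M3).sub M4
  refine (this.congr_left fun p => ?_).congr_right fun p => by ring
  unfold jacDet; ring

lemma model_fderiv (p v : ℝ × ℝ) :
    fderiv ℝ (fun p : ℝ × ℝ => (p.1, p.1 ^ 2 * p.2 + p.2 ^ 4)) p v =
      (v.1, 2 * p.1 * p.2 * v.1 + (p.1 ^ 2 + 4 * p.2 ^ 3) * v.2) := by
  have hx : HasFDerivAt (fun p : ℝ × ℝ => p.1) (ContinuousLinearMap.fst ℝ ℝ ℝ) p :=
    hasFDerivAt_fst
  have hy : HasFDerivAt (fun p : ℝ × ℝ => p.2) (ContinuousLinearMap.snd ℝ ℝ ℝ) p :=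
    hasFDerivAt_snd
  have := (hx.prodMk (((hx.fun_mul hx).fun_mul hy).fun_add
    ((hy.fun_mul hy).fun_mul (hy.fun_mul hy)))).fderiv
  have e : (fun p : ℝ × ℝ => (p.1, p.1 ^ 2 * p.2 + p.2 ^ 4)) =
      fun p => (p.1, p.1 * p.1 * p.2 + p.2 * p.2 * (p.2 * p.2)) := by
    funext p; congr 1; ring
  rw [e, this]
  simp
  ring

lemma model_smooth :
    ContDiff ℝ (⊤ : ℕ∞) (fun p : ℝ × ℝ => (p.1, p.1 ^ 2 * p.2 + p.2 ^ 4)) := by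
  fun_prop

lemma model_jac (p : ℝ × ℝ) :
    jacDet (fun p : ℝ × ℝ => (p.1, p.1 ^ 2 * p.2 + p.2 ^ 4)) p = p.1 ^ 2 + 4 * p.2 ^ 3 := by
  unfold jacDet
  rw [model_fderiv, model_fderiv]; simp

lemma model_cc {s : ℝ} (hs : s ≠ 0) :
    Cc (jacDet (fun p : ℝ × ℝ => (p.1, p.1 ^ 2 * p.2 + p.2 ^ 4))) (0, s) := by
  refine cc_of_taylor (a := 1) (L := ContinuousLinearMap.fst ℝ ℝ ℝ) 0 0 0 4 one_ne_zero ?_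
    (by simp) (by simpa using hs) ?_
  · intro h
    have := congrArg (fun l => l ((1, 0) : ℝ × ℝ)) h
    simp at this
  · refine (isLittleO_zero _ _).congr_left fun p => ?_
    rw [model_jac]; simp

lemma jet_fderiv {F g : ℝ × ℝ → ℝ × ℝ} (hF : ContDiff ℝ (⊤ : ℕ∞) F) (hg : ContDiff ℝ (⊤ : ℕ∞) g)
    (h : ∀ i ≤ 4, iteratedFDeriv ℝ i F 0 = iteratedFDeriv ℝ i g 0) :
    (fun p => fderiv ℝ F p - fderiv ℝ g p) =o[𝓝 0] (fun p : ℝ × ℝ => ‖p‖ ^ 3) ∧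
      fderiv ℝ F 0 = fderiv ℝ g 0 := by
  have hs : ContDiff ℝ (⊤ : ℕ∞) (F - g) := hF.sub hg
  have e : fderiv ℝ (F - g) = fun p => fderiv ℝ F p - fderiv ℝ g p := by
    funext p
    exact fderiv_sub (hF.differentiable (by simp) p) (hg.differentiable (by simp) p)
  have hv : ∀ i ≤ 3, iteratedFDeriv ℝ i (fderiv ℝ (F - g)) 0 = 0 := by
    intro i hi
    rw [← norm_eq_zero, norm_iteratedFDeriv_fderiv, norm_eq_zero,
      iteratedFDeriv_sub (hF.of_le (by exact_mod_cast le_top))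
        (hg.of_le (by exact_mod_cast le_top)), Pi.sub_apply, h (i + 1) (by omega), sub_self]
  have := van_littleO 3 (hs.fderiv_right (m := (⊤ : ℕ∞)) (by simp)) hv
  refine ⟨by rwa [e] at this, ?_⟩
  have h0 := hv 0 (by norm_num)
  rw [← norm_eq_zero, norm_iteratedFDeriv_zero, norm_eq_zero, e] at h0
  exact sub_eq_zero.1 h0

lemma forward {f : ℝ × ℝ → ℝ × ℝ} (hf : ContDiff ℝ (⊤ : ℕ∞) f) (hf0 : f 0 = 0) {v : ℝ × ℝ}
    (hv : v ≠ 0) (hfv : fderiv ℝ f 0 v = 0)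
    (h : JetEquiv 4 f (fun p => (p.1, p.1 ^ 2 * p.2 + p.2 ^ 4))) : Cc (jacDet f) v := by
  obtain ⟨φ, ψ, hφ, hψ, φ0, ψ0, bφ, bψ, hj⟩ := h
  have hfφ : ContDiff ℝ (⊤ : ℕ∞) (f ∘ φ) := hf.comp hφ
  have hF : ContDiff ℝ (⊤ : ℕ∞) (ψ ∘ f ∘ φ) := hψ.comp hfφ
  obtain ⟨hd, hd0⟩ := jet_fderiv hF model_smooth hj
  have hjd := jac_diff hF model_smooth hd
  obtain ⟨χ, hχ, χ0, i1, i2⟩ := exists_inverse hφ φ0 bφ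
  have hφχ := fderiv_comp_id hφ hχ χ0 i1
  have hχφ := fderiv_comp_id hχ hφ φ0 i2
  have bχ : Function.Bijective (fderiv ℝ χ 0) :=
    ⟨Function.LeftInverse.injective hφχ, Function.RightInverse.surjective hχφ⟩
  set u := fderiv ℝ χ 0 v with hu
  have hFu : fderiv ℝ (ψ ∘ f ∘ φ) 0 u = 0 := by
    rw [fderiv_comp 0 (hψ.differentiable (by simp) _) (hfφ.differentiable (by simp) _),
      fderiv_comp 0 (hf.differentiable (by simp) _) (hφ.differentiable (by simp) _)]
    simp only [ContinuousLinearMap.comp_apply]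
    rw [hφχ, φ0, hfv, map_zero]
  have hu1 : u.1 = 0 := by
    rw [hd0, model_fderiv] at hFu
    exact congrArg Prod.fst hFu
  have hu2 : u.2 ≠ 0 := by
    intro h2
    apply hv
    rw [← hφχ v, ← hu, show u = 0 from Prod.ext hu1 h2, map_zero]
  have hc : Cc (jacDet (ψ ∘ f ∘ φ)) u := by
    have : u = (0, u.2) := Prod.ext hu1 rfl
    rw [this]
    exact (model_cc hu2).perturb hjd
  have nψ := jacDet_ne hψ ψ0 bψ
  have nφ := jacDet_ne hφ φ0 bφ
  have sd : ContDiff ℝ (⊤ : ℕ∞) (fun q => jacDet ψ (f q) * jacDet φ (χ q)) :=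
    ((jacDet_smooth hψ).comp hf).mul ((jacDet_smooth hφ).comp hχ)
  have n0 : jacDet ψ (f 0) * jacDet φ (χ 0) ≠ 0 := by
    rw [hf0, χ0]; exact mul_ne_zero nψ nφ
  refine hc.transport (w := fun q => (jacDet ψ (f q) * jacDet φ (χ q))⁻¹) hχ χ0 bχ rfl
    ((sd.differentiable (by simp) 0).inv n0) (inv_ne_zero n0) ?_
  filter_upwards [i1, sd.continuous.continuousAt.eventually_ne n0] with q hq hne
  rw [jacDet_comp hψ hfφ, jacDet_comp hf hφ]
  simp only [Function.comp, hq]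
  rw [eq_inv_mul_iff_mul_eq₀ hne]
  ring

lemma pdy_line {K : ℝ × ℝ → ℝ} (hK : ContDiff ℝ (⊤ : ℕ∞) K) {d : ℝ}
    (h : HasDerivAt (fun y : ℝ => K (0, y)) d 0) : pdy K 0 = d := by
  have h1 : HasFDerivAt K (fderiv ℝ K 0) ((fun y : ℝ => ((0 : ℝ), y)) 0) :=
    (hK.differentiable (by simp) _).hasFDerivAt
  have h2 : HasDerivAt (fun y : ℝ => ((0 : ℝ), y)) (0, 1) 0 :=
    (hasDerivAt_const _ _).prodMk (hasDerivAt_id _)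
  exact (h1.comp_hasDerivAt 0 h2).unique h

lemma jac_graph {K : ℝ × ℝ → ℝ} (hK : ContDiff ℝ (⊤ : ℕ∞) K) (p : ℝ × ℝ) :
    jacDet (fun p => (p.1, K p)) p = pdy K p := by
  have hx : HasFDerivAt (fun p : ℝ × ℝ => p.1) (ContinuousLinearMap.fst ℝ ℝ ℝ) p :=
    hasFDerivAt_fst
  have := (hx.prodMk (hK.differentiable (by simp) p).hasFDerivAt).fderiv
  unfold jacDet
  rw [this]
  simp [pdy, dop]

lemma jets_of_vord {F g : ℝ × ℝ → ℝ × ℝ} (hF : ContDiff ℝ (⊤ : ℕ∞) F)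
    (hg : ContDiff ℝ (⊤ : ℕ∞) g) {d : ℝ × ℝ → ℝ} (hd : VOrd 5 d)
    (h : ∀ᶠ p in 𝓝 0, F p - g p = (0, d p)) :
    ∀ i ≤ 4, iteratedFDeriv ℝ i F 0 = iteratedFDeriv ℝ i g 0 := by
  intro i hi
  have h1 := (iter_comp_left (ContinuousLinearMap.inr ℝ ℝ ℝ) hd).2 i (by omega)
  have h2 : (F - g) =ᶠ[𝓝 0] fun p => ContinuousLinearMap.inr ℝ ℝ ℝ (d p) :=
    h.mono fun p hp => by simpa using hp
  have h3 := (h2.iteratedFDeriv ℝ i).self_of_nhds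
  rw [h1, iteratedFDeriv_sub (hF.of_le (by exact_mod_cast le_top))
        (hg.of_le (by exact_mod_cast le_top)), Pi.sub_apply] at h3
  exact sub_eq_zero.1 h3

lemma VOrd.cmul {n : ℕ} {a : ℝ × ℝ → ℝ} (c : ℝ) (h : VOrd n a) : VOrd n (fun p => c * a p) := by
  have := (ord_zero (contDiff_const (c := c))).mul h
  rwa [zero_add] at this

lemma real_cube_root (a : ℝ) : ∃ t : ℝ, t ^ 3 = a := by
  have h : ∀ b : ℝ, 0 ≤ b → ∃ t : ℝ, t ^ 3 = b := fun b hb =>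
    ⟨b ^ ((3 : ℕ) : ℝ)⁻¹, Real.rpow_inv_natCast_pow hb (by norm_num)⟩
  rcases le_total 0 a with ha | ha
  · exact h a ha
  · obtain ⟨t, ht⟩ := h (-a) (by linarith)
    exact ⟨-t, by linear_combination -ht⟩

set_option maxHeartbeats 1000000 in
lemma normal_form {F : ℝ × ℝ → ℝ × ℝ} (hF : ContDiff ℝ (⊤ : ℕ∞) F) {G : ℝ × ℝ → ℝ}
    (hG : ContDiff ℝ (⊤ : ℕ∞) G) (hFG : ∀ᶠ p in 𝓝 0, F p = (p.1, G p))
    (t00 : tcoeff G 0 0 = 0) (t01 : tcoeff G 0 1 = 0) (t11 : tcoeff G 1 1 = 0)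
    (t02 : tcoeff G 0 2 = 0) (t12 : tcoeff G 1 2 = 0) (t03 : tcoeff G 0 3 = 0)
    (t21 : tcoeff G 2 1 ≠ 0) (t04 : tcoeff G 0 4 ≠ 0) :
    JetEquiv 4 F (fun p => (p.1, p.1 ^ 2 * p.2 + p.2 ^ 4)) := by
  have T := taylor5 G hG
  rw [t00, t01, t11, t02, t12, t03] at T
  generalize tcoeff G 1 0 = g10 at *
  generalize tcoeff G 2 0 = g20 at *
  generalize tcoeff G 3 0 = g30 at *
  generalize tcoeff G 2 1 = g21 at *
  generalize tcoeff G 4 0 = g40 at *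
  generalize tcoeff G 3 1 = g31 at *
  generalize tcoeff G 2 2 = g22 at *
  generalize tcoeff G 1 3 = g13 at *
  generalize tcoeff G 0 4 = g04 at *
  obtain ⟨s, hs⟩ : ∃ s : ℝ, 4 * g04 * s + g13 = 0 := ⟨-g13 / (4 * g04), by field_simp; ring⟩
  obtain ⟨t, ht'⟩ := real_cube_root (g21 / g04)
  have ht : g04 * t ^ 3 = g21 := by rw [ht']; field_simp
  have ht0 : t ≠ 0 := by
    rintro rfl
    apply t21; rw [← ht]; ring
  obtain ⟨β, hβ⟩ : ∃ β : ℝ,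
      g21 * β + t * (g31 + 2 * g22 * s + 3 * g13 * s ^ 2 + 4 * g04 * s ^ 3) = 0 :=
    ⟨-(t * (g31 + 2 * g22 * s + 3 * g13 * s ^ 2 + 4 * g04 * s ^ 3)) / g21, by field_simp; ring⟩
  obtain ⟨γ, hγ⟩ : ∃ γ : ℝ,
      g21 * γ + t ^ 2 * (g22 + 3 * g13 * s + 6 * g04 * s ^ 2) = 0 :=
    ⟨-(t ^ 2 * (g22 + 3 * g13 * s + 6 * g04 * s ^ 2)) / g21, by field_simp; ring⟩
  obtain ⟨u, hu⟩ : ∃ u : ℝ, u * g21 * t = 1 := ⟨1 / (g21 * t), by field_simp⟩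
  have hu0 : u ≠ 0 := by rintro rfl; simp at hu
  obtain ⟨c3, hc3⟩ : ∃ c3 : ℝ, c3 = g30 + g21 * s := ⟨_, rfl⟩
  obtain ⟨c4, hc4⟩ : ∃ c4 : ℝ,
    c4 = g40 + g31 * s + g22 * s ^ 2 + g13 * s ^ 3 + g04 * s ^ 4 := ⟨_, rfl⟩
  let Y : ℝ × ℝ → ℝ := fun p => t * p.2 + s * p.1 + β * (p.1 * p.2) + γ * p.2 ^ 2
  let Z : ℝ × ℝ → ℝ := fun q =>
    u * (q.2 - (g10 * q.1 + g20 * q.1 ^ 2 + c3 * q.1 ^ 3 + c4 * q.1 ^ 4))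
  have hY : ContDiff ℝ (⊤ : ℕ∞) Y := by simp only [Y]; fun_prop
  have hZ : ContDiff ℝ (⊤ : ℕ∞) Z := by simp only [Z]; fun_prop
  let φ : ℝ × ℝ → ℝ × ℝ := fun p => (p.1, Y p)
  let ψ : ℝ × ℝ → ℝ × ℝ := fun p => (p.1, Z p)
  have hφ : ContDiff ℝ (⊤ : ℕ∞) φ := contDiff_fst.prodMk hY
  have hψ : ContDiff ℝ (⊤ : ℕ∞) ψ := contDiff_fst.prodMk hZ
  have φ0 : φ 0 = 0 := by simp [φ, Y]
  have ψ0 : ψ 0 = 0 := by simp [ψ, Z]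
  have dY : pdy Y 0 = t := by
    apply pdy_line hY
    have h := ((hasDerivAt_id (0 : ℝ)).const_mul t).add
      (((hasDerivAt_id (0 : ℝ)).pow 2).const_mul γ)
    simp at h
    refine h.congr_of_eventuallyEq (Eventually.of_forall fun y => ?_)
    simp [Y]
  have dZ : pdy Z 0 = u := by
    apply pdy_line hZ
    have h := (hasDerivAt_id (0 : ℝ)).const_mul u
    simp at h
    refine h.congr_of_eventuallyEq (Eventually.of_forall fun y => ?_)
    simp [Z]
  refine ⟨φ, ψ, hφ, hψ, φ0, ψ0, bij_of_jacDet ?_, bij_of_jacDet ?_, ?_⟩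
  · rw [jac_graph hY, dY]; exact ht0
  · rw [jac_graph hZ, dZ]; exact hu0
  have ox : VOrd 1 (fun p : ℝ × ℝ => p.1) := ord_one contDiff_fst rfl
  have oy : VOrd 1 (fun p : ℝ × ℝ => p.2) := ord_one contDiff_snd rfl
  have o1 : VOrd 1 (fun p : ℝ × ℝ => t * p.2 + s * p.1) := (oy.cmul t).add (ox.cmul s)
  have o2 : VOrd 2 (fun p : ℝ × ℝ => β * (p.1 * p.2) + γ * (p.2 * p.2)) :=
    ((ox.mul oy).cmul β).add ((oy.mul oy).cmul γ)
  have o22 := o2.mul o2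
  have o222 := o22.mul o2
  have o2222 := o22.mul o22
  have o11 := o1.mul o1
  have m1 := (((ox.mul ox).mul ox).mul o2).cmul g31
  have m2 := ((((ox.mul ox).mul o1).mul o2).cmul 2 |>.add
    (((ox.mul ox).mul o22).mono (by norm_num : 5 ≤ _))).cmul g22
  have m3 := (((((ox.mul o11).mul o2).cmul 3).add
    ((((ox.mul o1).mul o22).mono (by norm_num : 5 ≤ _)).cmul 3)).add
    ((ox.mul o222).mono (by norm_num : 5 ≤ _))).cmul g13
  have m4 := ((((((o11.mul o1).mul o2).cmul 4).add
    (((o11.mul o22).mono (by norm_num : 5 ≤ _)).cmul 6)).add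
    (((o1.mul o222).mono (by norm_num : 5 ≤ _)).cmul 4)).add
    (o2222.mono (by norm_num : 5 ≤ _))).cmul g04
  have mR := T.comp hφ φ0
  have M := ((mR.add (((m1.add m2).add m3).add m4))).cmul u
  refine jets_of_vord (hψ.comp (hF.comp hφ)) model_smooth M ?_
  have htend : Tendsto φ (𝓝 0) (𝓝 0) := by
    have := hφ.continuous.tendsto 0
    rwa [φ0] at this
  filter_upwards [htend.eventually hFG] with p hp
  simp only [Function.comp, hp]
  refine Prod.ext (by simp [ψ, φ]) ?_
  simp only [ψ, φ, Z, Y, Prod.snd_sub]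
  rw [hc3, hc4]
  linear_combination p.1 ^ 2 * p.2 * hu + p.2 ^ 4 * (hu + u * t * ht)
    + u * t ^ 3 * p.1 * p.2 ^ 3 * hs + u * p.1 ^ 2 * p.2 ^ 2 * hγ + u * p.1 ^ 3 * p.2 * hβ

lemma exists_target_swap {f : ℝ × ℝ → ℝ × ℝ} (h : fderiv ℝ f 0 ≠ 0) :
    ∃ S : (ℝ × ℝ) ≃L[ℝ] (ℝ × ℝ),
      (S (fderiv ℝ f 0 (1, 0))).1 ≠ 0 ∨ (S (fderiv ℝ f 0 (0, 1))).1 ≠ 0 := by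
  by_contra hcon
  push Not at hcon
  have h1 := hcon (ContinuousLinearEquiv.refl ℝ _)
  have h2 := hcon (ContinuousLinearEquiv.prodComm ℝ ℝ ℝ)
  simp at h1 h2
  apply h
  apply ContinuousLinearMap.ext
  intro v
  rw [fderiv_pair_decomp, show fderiv ℝ f 0 (1, 0) = 0 from Prod.ext h1.1 h2.1,
    show fderiv ℝ f 0 (0, 1) = 0 from Prod.ext h1.2 h2.2]
  simp

lemma backward {f : ℝ × ℝ → ℝ × ℝ} (hf : ContDiff ℝ (⊤ : ℕ∞) f) (hf0 : f 0 = 0) {v : ℝ × ℝ}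
    (hv : v ≠ 0) (hfv : fderiv ℝ f 0 v = 0) (hn : fderiv ℝ f 0 ≠ 0) (h : Cc (jacDet f) v) :
    JetEquiv 4 f (fun p => (p.1, p.1 ^ 2 * p.2 + p.2 ^ 4)) := by
  obtain ⟨S, hS⟩ := exists_target_swap hn
  have sS : ContDiff ℝ (⊤ : ℕ∞) S := S.contDiff
  have bS : Function.Bijective (fderiv ℝ S 0) := by
    rw [S.fderiv]; exact S.bijective
  have nS := jacDet_ne sS (map_zero S) bS
  have s1 : ContDiff ℝ (⊤ : ℕ∞) (S ∘ f) := sS.comp hf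
  have d1 : ∀ u, fderiv ℝ (S ∘ f) 0 u = S (fderiv ℝ f 0 u) := fun u => by
    rw [S.comp_fderiv]; rfl
  set a := (S (fderiv ℝ f 0 (1, 0))).1 with ha
  set b := (S (fderiv ℝ f 0 (0, 1))).1 with hb
  let Φ : ℝ × ℝ → ℝ × ℝ := fun p => ((S (f p)).1, -b * p.1 + a * p.2)
  have hΦ : ContDiff ℝ (⊤ : ℕ∞) Φ := by
    refine s1.fst.prodMk ?_
    fun_prop
  have Φ0 : Φ 0 = 0 := by simp [Φ, hf0]
  have dΦ : ∀ u, fderiv ℝ Φ 0 u = ((S (fderiv ℝ f 0 u)).1, -b * u.1 + a * u.2) := by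
    intro u
    have h1 := (s1.differentiable (by simp) 0).hasFDerivAt.fst
    have hx : HasFDerivAt (fun p : ℝ × ℝ => p.1) (ContinuousLinearMap.fst ℝ ℝ ℝ) 0 :=
      hasFDerivAt_fst
    have hy : HasFDerivAt (fun p : ℝ × ℝ => p.2) (ContinuousLinearMap.snd ℝ ℝ ℝ) 0 :=
      hasFDerivAt_snd
    have h2 := h1.prodMk ((hx.const_mul (-b)).fun_add (hy.const_mul a))
    have h3 : fderiv ℝ Φ 0 = _ := h2.fderiv
    rw [h3, ← d1]
    simp
  have jΦ : jacDet Φ 0 ≠ 0 := by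
    unfold jacDet
    rw [dΦ, dΦ]
    simp only [← ha, ← hb]
    have : 0 < a * a + b * b := by
      rcases hS with h | h
      · have := mul_self_pos.2 h; nlinarith [mul_self_nonneg b]
      · have := mul_self_pos.2 h; nlinarith [mul_self_nonneg a]
    intro h0
    linarith
  have bΦ := bij_of_jacDet jΦ
  obtain ⟨χ, hχ, χ0, i1, i2⟩ := exists_inverse hΦ Φ0 bΦ
  have hΦχ := fderiv_comp_id hΦ hχ χ0 i1
  have hχΦ := fderiv_comp_id hχ hΦ Φ0 i2
  have bχ : Function.Bijective (fderiv ℝ χ 0) :=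
    ⟨Function.LeftInverse.injective hΦχ, Function.RightInverse.surjective hχΦ⟩
  have nχ := jacDet_ne hχ χ0 bχ
  let F : ℝ × ℝ → ℝ × ℝ := (S ∘ f) ∘ χ
  have hF : ContDiff ℝ (⊤ : ℕ∞) F := s1.comp hχ
  let G : ℝ × ℝ → ℝ := fun p => (F p).2
  have hG : ContDiff ℝ (⊤ : ℕ∞) G := hF.snd
  have hFG : ∀ᶠ p in 𝓝 0, F p = (p.1, G p) := by
    filter_upwards [i1] with p hp
    have hp1 : (Φ (χ p)).1 = p.1 := by rw [hp]
    exact Prod.ext hp1 rfl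
  set v' := fderiv ℝ Φ 0 v with hv'
  have v1 : v'.1 = 0 := by rw [hv', dΦ, hfv]; simp
  have v2 : v'.2 ≠ 0 := by
    intro h2
    apply hv
    rw [← hχΦ v, ← hv', show v' = 0 from Prod.ext v1 h2, map_zero]
  have sw : ContDiff ℝ (⊤ : ℕ∞) (fun q => jacDet S (f (χ q)) * jacDet χ q) :=
    ((jacDet_smooth sS).comp (hf.comp hχ)).mul (jacDet_smooth hχ)
  have c1 : Cc (jacDet F) v' := by
    refine h.transport (w := fun q => jacDet S (f (χ q)) * jacDet χ q) hχ χ0 bχ (hχΦ v)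
      (sw.differentiable (by simp) 0) ?_ (Eventually.of_forall fun q => ?_)
    · rw [χ0, hf0]; exact mul_ne_zero nS nχ
    · simp only [F]
      rw [jacDet_comp s1 hχ, jacDet_comp sS hf]
      ring
  have c2 : Cc (pdy G) v' := by
    refine c1.perturb ((isLittleO_zero _ _).congr' ?_ EventuallyEq.rfl)
    filter_upwards [eventually_eventually_nhds.2 hFG] with p hp
    have hp' : F =ᶠ[𝓝 p] fun p => (p.1, G p) := hp
    rw [jacDet_congr hp', jac_graph hG, sub_self]
  obtain ⟨e00, e10, e01, ⟨k, l1, l2, hk, hl, hlv, e20, e11, e02⟩, e3⟩ := c2.dd (pdy_smooth hG)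
  have hl2 : l2 = 0 := by
    rw [v1] at hlv
    simpa [v2] using hlv
  have hl1 : l1 ≠ 0 := hl.resolve_right (fun h => h hl2)
  rw [hl2] at e11 e02
  rw [v1] at e3
  have sc : ∀ i j, tcoeff (pdy G) i j = (j + 1) * tcoeff G i (j + 1) := by
    intro i j
    unfold tcoeff
    rw [Function.iterate_succ_apply, Nat.factorial_succ]
    have : ((i.factorial : ℝ)) ≠ 0 := by positivity
    have : ((j.factorial : ℝ)) ≠ 0 := by positivity
    have : ((j : ℝ) + 1) ≠ 0 := by positivity
    push_cast
    field_simp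
  rw [sc] at e00 e10 e01 e20 e11 e02
  simp only [sc] at e3
  norm_num at e00 e10 e01 e20 e11 e02 e3
  have hNF : JetEquiv 4 F (fun p => (p.1, p.1 ^ 2 * p.2 + p.2 ^ 4)) := by
    refine normal_form hF hG hFG ?_ e00 e10 e01 e11 e02 ?_ e3.1
    · simp [tcoeff, G, F, χ0, hf0]
    · rw [e20]; positivity
  obtain ⟨φ, ψ, hφ, hψ, φ0, ψ0, bφ, bψ, hj⟩ := hNF
  refine ⟨χ ∘ φ, ψ ∘ S, hχ.comp hφ, hψ.comp sS, by simp [φ0, χ0], by simp [ψ0],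
    bij_of_jacDet ?_, bij_of_jacDet ?_, hj⟩
  · rw [jacDet_comp hχ hφ, φ0]
    exact mul_ne_zero nχ (jacDet_ne hφ φ0 bφ)
  · rw [jacDet_comp hψ sS, map_zero]
    exact mul_ne_zero (jacDet_ne hψ ψ0 bψ) nS

theorem stmt16 (f η : ℝ × ℝ → ℝ × ℝ)
    (hf : ContDiff ℝ (⊤ : ℕ∞) f) (hf0 : f 0 = 0) (hcr : CorankOne f)
    (hη : IsNullVF f η) :
    JetEquiv 4 f (fun p => (p.1, p.1 ^ 2 * p.2 + p.2 ^ 4)) ↔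
      (fderiv ℝ (jacDet f) 0 = 0 ∧ (hess (jacDet f)).rank = 1 ∧
        etaIter η 2 (jacDet f) 0 = 0 ∧ etaIter η 3 (jacDet f) 0 ≠ 0) := by
  obtain ⟨hη0, U, hU, hηU, hnull⟩ := hη
  obtain ⟨hl0, hn⟩ := corank_facts hcr
  have hs := jacDet_smooth hf
  have hηs : ∀ᶠ p in 𝓝 0, ContDiffAt ℝ (⊤ : ℕ∞) η p := by
    filter_upwards [eventually_mem_nhds_iff.2 hU] with p hp
    exact hηU.contDiffAt hp
  have hfv := hnull 0 (mem_of_mem_nhds hU) hl0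
  rw [conditions_iff hs hηs hl0]
  exact ⟨fun h => (forward hf hf0 hη0 hfv h).dd hs, fun h => backward hf hf0 hη0 hfv hn (h.cc hs)⟩
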